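/- Let α > 0, d ≥ 1, ℓ = ⌊α⌋⁻, m = C(ℓ+d, ℓ), and c_N > 0. There is a constant C > 0 depending only on α, d and c_N such that: for every set A = {w_1, …, w_m} ⊂ [0,1]^d that is a norming set for 𝒫_ℓ([0,1]^d) with norming constant c_N, every x ∈ [0,1]^d, and every ν ∈ (0,1), the Matérn kernel matrix K_{νA,νA} is invertible and ‖K_{νA,νA}⁻¹ K_{νA,νx} − V_A⁻¹ v_x‖₁ ≤ C (ν^{2(α−ℓ)} Λ + ν), where Λ = 1 if α ∉ ℕ and Λ = ln(1/ν) if α ∈ ℕ. -/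

import Mathlib

open Matrix MeasureTheory

noncomputable section

/-- The Matérn function with regularity `α` on ℝ^d (Fourier normalization):
`K_α(x) = ∫ cos⟨x,ξ⟩ (1+‖ξ‖₂²)^{-(α+d/2)} dξ`. -/
def matern (α : ℝ) (d : ℕ) (x : Fin d → ℝ) : ℝ :=
  ∫ ξ : Fin d → ℝ, Real.cos (∑ j, x j * ξ j) * (1 + ∑ j, ξ j ^ 2) ^ (-(α + (d : ℝ) / 2))

/-- `⌊α⌋⁻`, the largest integer strictly smaller than `α` (for `α > 0`). -/
def lbelow (α : ℝ) : ℕ := Nat.ceil α - 1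

/-- `α` is a (nonnegative) integer. -/
def IsNatVal (α : ℝ) : Prop := ∃ n : ℕ, α = n

/-- The Euclidean norm `‖x‖₂` on ℝ^d. -/
def nrm {d : ℕ} (x : Fin d → ℝ) : ℝ := Real.sqrt (∑ j, x j ^ 2)

/-- Partial derivative in the `j`-th coordinate. -/
def pder (d : ℕ) (j : Fin d) (f : (Fin d → ℝ) → ℝ) : (Fin d → ℝ) → ℝ :=
  fun x => fderiv ℝ f x (Pi.single j 1)

/-- The iterated partial derivative `∂^k` associated with a multi-index `k ∈ ℕ^d`. -/
def mder (d : ℕ) (k : Fin d → ℕ) (f : (Fin d → ℝ) → ℝ) : (Fin d → ℝ) → ℝ :=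
  (List.finRange d).foldr (fun j g => (pder d j)^[k j] g) f

/-- Mixed derivative `F^{(k₁,k₂)}(x₁,x₂) = ∂^{k₁}_{x₁} ∂^{k₂}_{x₂} F(x₁,x₂)`. -/
def mder2 (d : ℕ) (k₁ k₂ : Fin d → ℕ) (F : (Fin d → ℝ) → (Fin d → ℝ) → ℝ)
    (x₁ x₂ : Fin d → ℝ) : ℝ :=
  mder d k₁ (fun y => mder d k₂ (F y) x₂) x₁

/-- The Matérn kernel matrix `K_{A,A} = (K(w_i, w_j))_{i,j}`. -/
def maternMat (α : ℝ) (d : ℕ) {n : ℕ} (w : Fin n → Fin d → ℝ) :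
    Matrix (Fin n) (Fin n) ℝ :=
  Matrix.of fun i j => matern α d (w i - w j)

/-- The Matérn kernel column vector `K_{A,x} = (K(w_i, x))_i`. -/
def maternVec (α : ℝ) (d : ℕ) {n : ℕ} (w : Fin n → Fin d → ℝ) (x : Fin d → ℝ) :
    Fin n → ℝ :=
  fun i => matern α d (w i - x)

/-- The conditional kernel `K̃(x₁,x₂) = K(x₁,x₂) − K_{x₁,A} K_{A,A}⁻¹ K_{A,x₂}`. -/
def condK (α : ℝ) (d : ℕ) {n : ℕ} (w : Fin n → Fin d → ℝ) (x₁ x₂ : Fin d → ℝ) : ℝ :=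
  matern α d (x₁ - x₂) -
    maternVec α d w x₁ ⬝ᵥ ((maternMat α d w)⁻¹ *ᵥ maternVec α d w x₂)

/-- The unit cube `[0,1]^d`. -/
def unitCube (d : ℕ) : Set (Fin d → ℝ) := {x | ∀ t, 0 ≤ x t ∧ x t ≤ 1}

/-- `A = {w_1,…,w_m}` is a norming set for `𝒫_l(Ω)` with norming constant `c`. -/
def IsNorming {d : ℕ} (l : ℕ) (Ω : Set (Fin d → ℝ)) {m : ℕ}
    (w : Fin m → Fin d → ℝ) (c : ℝ) : Prop :=
  ∀ P : MvPolynomial (Fin d) ℝ, P.totalDegree ≤ l →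
    ∀ x ∈ Ω, |MvPolynomial.eval x P| ≤ c * ⨆ i : Fin m, |MvPolynomial.eval (w i) P|

/-- Axis-parallel cube with corner `z` and side length `s`. -/
def cube (d : ℕ) (z : Fin d → ℝ) (s : ℝ) : Set (Fin d → ℝ) :=
  {y | ∀ t, z t ≤ y t ∧ y t ≤ z t + s}

/-- Geometric hypotheses at scale `L` with constants `c_L, c_d, c_N`: `A ∪ {x}` lies in an
axis-parallel cube of side length at most `c_L·L`, the points `w_1,…,w_m, x` are pairwise at
`‖·‖_∞`-distance at least `c_d·L`, and `A` is a norming set for `𝒫_{⌊α⌋⁻}` of that cube with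
norming constant `c_N`. -/
def GeomHyp (α : ℝ) (d : ℕ) (cL cd cN L : ℝ) {m : ℕ}
    (w : Fin m → Fin d → ℝ) (x : Fin d → ℝ) : Prop :=
  ∃ z : Fin d → ℝ, ∃ s : ℝ, 0 ≤ s ∧ s ≤ cL * L ∧
    (∀ i, w i ∈ cube d z s) ∧ x ∈ cube d z s ∧
    (∀ i j, i ≠ j → ∃ t, cd * L ≤ |w i t - w j t|) ∧
    (∀ i, ∃ t, cd * L ≤ |w i t - x t|) ∧
    IsNorming (lbelow α) (cube d z s) w cN

/-- Degree-then-lexicographic strict order on multi-indices in ℕ^d. -/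
def degLex {d : ℕ} (k k' : Fin d → ℕ) : Prop :=
  (∑ j, k j < ∑ j, k' j) ∨
    ((∑ j, k j = ∑ j, k' j) ∧ ∃ i : Fin d, k i < k' i ∧ ∀ j : Fin d, j < i → k j = k' j)

/-- `kE` enumerates all multi-indices of ℕ^d in increasing degree-then-lex order. -/
def IsMultiIndexEnum (d : ℕ) (kE : ℕ → Fin d → ℕ) : Prop :=
  Function.Bijective kE ∧ ∀ i j : ℕ, i < j → degLex (kE i) (kE j)

/-- The vector `v_x = (x^{k_{(1)}}, …, x^{k_{(m)}})ᵀ`. -/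
def vVec {d : ℕ} (kE : ℕ → Fin d → ℕ) (m : ℕ) (x : Fin d → ℝ) : Fin m → ℝ :=
  fun i => ∏ t, x t ^ kE (i : ℕ) t

/-- The Vandermonde matrix `V_A` with entries `V_A[i,j] = (w_j)^{k_{(i)}}`. -/
def vand {d : ℕ} (kE : ℕ → Fin d → ℕ) (m : ℕ) (w : Fin m → Fin d → ℝ) :
    Matrix (Fin m) (Fin m) ℝ :=
  Matrix.of fun i j => ∏ t, w j t ^ kE (i : ℕ) t

/-!
By Bochner's formula `K(x - y) = ⟪e_x, e_y⟫`, where `e_y = exp (i⟨y, ·⟩)` are the plane waves in the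
`L²` space of the spectral measure `(1 + ‖ξ‖²)^{-(α + d/2)} dξ`. Thus `K_{νA,νA}` is the Gram matrix
of linearly independent vectors, and `a = K_{νA,νA}⁻¹ K_{νA,νx}` are the coefficients of the
orthogonal projection of `e_{νx}` onto the span of the `e_{νw}`.

Taylor expansion gives `e_{νy} = ∑ k, (νy)^k q_k + r_{νy}` with `q_k = (iξ)^k / k!`, `|k| ≤ ℓ`, and
the weights `b = V_A⁻¹ v_x` match all the Taylor polynomials. So `e_{νx} - ∑ b e_{νw}` is a
combination of the remainders, whose norm is `O(ν^ℓ η)` with `η² = ν^{2(α-ℓ)} + ν`. The remainders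
are moreover almost orthogonal to the `q_k`: their inner products are `O(ν^ℓ η²)`, since in top
degree the next Taylor term is out of phase with `q_k` and drops out. Testing the projection
equations with `∑ (a - b) e_{νw} = ∑ y_k q_k + (small)`, `y = V_{νA} (a - b)`, then gives
`‖y‖₁ = O(ν^ℓ η²)`, and `V_{νA}⁻¹` costs only `ν^{-ℓ}`. This settles small `ν`. The norming tuples
form a compact set on which `V_A` is invertible, which makes the constants uniform and also covers
`ν` bounded away from `0`.
-/

section Galerkin

open scoped InnerProductSpace

variable {H : Type*} [NormedAddCommGroup H] [InnerProductSpace ℝ H]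
  {ι κ : Type*} [Fintype ι]

theorem exists_mul_sum_abs_le_norm_sum_smul [Fintype κ] {q : κ → H} (hq : LinearIndependent ℝ q) :
    ∃ r : ℝ, 0 < r ∧ ∀ y : κ → ℝ, r * ∑ k, |y k| ≤ ‖∑ k, y k • q k‖ := by
  obtain ⟨K, hK, hanti⟩ := (Fintype.linearCombination ℝ q).exists_antilipschitzWith
    (LinearMap.ker_eq_bot.mpr hq.fintypeLinearCombination_injective)
  refine ⟨(K * (Fintype.card κ + 1))⁻¹, by positivity, fun y => ?_⟩
  have hy : ‖y‖ ≤ K * ‖∑ k, y k • q k‖ := by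
    simpa [Fintype.linearCombination_apply] using hanti.le_mul_norm (map_zero _) y
  rw [inv_mul_le_iff₀ (by positivity)]
  calc ∑ k, |y k| ≤ ∑ _k : κ, ‖y‖ := Finset.sum_le_sum fun k _ => norm_le_pi_norm y k
    _ = Fintype.card κ * ‖y‖ := by simp
    _ ≤ (Fintype.card κ + 1) * (K * ‖∑ k, y k • q k‖) := by gcongr; linarith
    _ = _ := by ring

/-- The remainder condition of the perturbation argument: `r` has size at most `p * η`, and its
inner product with each `q k` is smaller by a further factor `η`. -/
structure NearlyOrthogonal (q : κ → H) (p η : ℝ) (r : H) : Prop where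
  norm_le : ‖r‖ ≤ p * η
  abs_inner_le : ∀ k, |⟪q k, r⟫_ℝ| ≤ p * η ^ 2

namespace NearlyOrthogonal

variable {q : κ → H} {p p' η : ℝ}

theorem sub {r r' : H} (hr : NearlyOrthogonal q p η r) (hr' : NearlyOrthogonal q p' η r') :
    NearlyOrthogonal q (p + p') η (r - r') where
  norm_le := by linarith [norm_sub_le r r', hr.norm_le, hr'.norm_le]
  abs_inner_le k := by
    rw [inner_sub_right]
    linarith [abs_sub ⟪q k, r⟫_ℝ ⟪q k, r'⟫_ℝ, hr.abs_inner_le k, hr'.abs_inner_le k]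

theorem mono {r : H} (hr : NearlyOrthogonal q p η r) (hη : 0 ≤ η) (h : p ≤ p') :
    NearlyOrthogonal q p' η r where
  norm_le := hr.norm_le.trans (by gcongr)
  abs_inner_le k := (hr.abs_inner_le k).trans (by gcongr)

theorem of_mul {a η' : ℝ} {r : H} (hr : NearlyOrthogonal q (a * p) η r) (hp : 0 ≤ p)
    (hη : 0 ≤ η) (ha : 1 ≤ a) (h : a * η ≤ η') : NearlyOrthogonal q p η' r where
  norm_le := hr.norm_le.trans (by rw [mul_comm a, mul_assoc]; gcongr)
  abs_inner_le k := by
    refine (hr.abs_inner_le k).trans ?_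
    calc a * p * η ^ 2 = p * (a * η ^ 2) := by ring
      _ ≤ p * (a ^ 2 * η ^ 2) := by gcongr; exact le_self_pow₀ ha two_ne_zero
      _ ≤ p * η' ^ 2 := by rw [← mul_pow]; gcongr

theorem sum_smul {R : ι → H} (hR : ∀ i, NearlyOrthogonal q p η (R i)) (a : ι → ℝ) :
    NearlyOrthogonal q ((∑ i, |a i|) * p) η (∑ i, a i • R i) where
  norm_le := by
    rw [mul_assoc, Finset.sum_mul]
    refine norm_sum_le_of_le _ fun i _ => ?_
    rw [norm_smul, Real.norm_eq_abs]
    exact mul_le_mul_of_nonneg_left (hR i).norm_le (abs_nonneg _)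
  abs_inner_le k := by
    rw [mul_assoc, Finset.sum_mul, inner_sum]
    refine (Finset.abs_sum_le_sum_abs _ _).trans (Finset.sum_le_sum fun i _ => ?_)
    rw [inner_smul_right, abs_mul]
    exact mul_le_mul_of_nonneg_left ((hR i).abs_inner_le k) (abs_nonneg _)

theorem inner_sum_smul_add_le [Fintype κ] {y : κ → ℝ} {r ρ : H}
    (hr : NearlyOrthogonal q (p' * ∑ k, |y k|) η r) (hρ : NearlyOrthogonal q p η ρ) :
    ⟪∑ k, y k • q k + r, ρ⟫_ℝ ≤ (1 + p') * p * η ^ 2 * ∑ k, |y k| := by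
  have hq : ⟪∑ k, y k • q k, ρ⟫_ℝ ≤ (∑ k, |y k|) * (p * η ^ 2) := by
    rw [sum_inner, Finset.sum_mul]
    refine Finset.sum_le_sum fun k _ => ?_
    rw [real_inner_smul_left]
    exact (le_abs_self _).trans <| (abs_mul _ _).trans_le <|
      mul_le_mul_of_nonneg_left (hρ.abs_inner_le k) (abs_nonneg _)
  have hrρ : ⟪r, ρ⟫_ℝ ≤ (p' * ∑ k, |y k|) * η * (p * η) :=
    (real_inner_le_norm r ρ).trans <|
      mul_le_mul hr.norm_le hρ.norm_le (norm_nonneg _) ((norm_nonneg _).trans hr.norm_le)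
  rw [inner_add_left]
  linarith

end NearlyOrthogonal

variable [Fintype κ]

theorem sum_smul_eq_sum_mulVec_smul_add (q : κ → H) (e : ι → H) (W : Matrix κ ι ℝ) (δ : ι → ℝ) :
    ∑ i, δ i • e i = ∑ k, (W *ᵥ δ) k • q k + ∑ i, δ i • (e i - ∑ k, W k i • q k) := by
  simp only [smul_sub, Finset.sum_sub_distrib, Finset.smul_sum, smul_smul, mulVec, dotProduct,
    Finset.sum_smul]
  rw [Finset.sum_comm (s := Finset.univ (α := κ))]
  simp only [mul_comm, add_sub_cancel]

theorem norm_sum_smul_sq_eq_inner_of_galerkin {e : ι → H} {e' : H} {a : ι → ℝ}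
    (ha : ∀ i, ⟪e i, e' - ∑ j, a j • e j⟫_ℝ = 0) (b : ι → ℝ) :
    ‖∑ i, (a - b) i • e i‖ ^ 2 = ⟪∑ i, (a - b) i • e i, e' - ∑ j, b j • e j⟫_ℝ := by
  have hsub : e' - ∑ j, b j • e j - ∑ i, (a - b) i • e i = e' - ∑ j, a j • e j := by
    simp only [Pi.sub_apply, sub_smul, Finset.sum_sub_distrib]
    abel
  rw [← real_inner_self_eq_norm_sq, eq_comm, ← sub_eq_zero, ← inner_sub_right, hsub, sum_inner]
  simp [real_inner_smul_left, ha]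

theorem sum_abs_sub_le_of_nearlyOrthogonal {q : κ → H} {e : ι → H} {e' : H}
    {W : Matrix κ ι ℝ} {a b : ι → ℝ} {s c p η : ℝ} (hs : 0 < s) (hp : 0 < p)
    (hcη : c * η ≤ s / 2)
    (hq : ∀ y : κ → ℝ, s * ∑ k, |y k| ≤ ‖∑ k, y k • q k‖)
    (hW : ∀ δ : ι → ℝ, p * ∑ i, |δ i| ≤ c * ∑ k, |(W *ᵥ δ) k|)
    (he : ∀ i, NearlyOrthogonal q p η (e i - ∑ k, W k i • q k))
    (he' : NearlyOrthogonal q p η (e' - ∑ k, (W *ᵥ b) k • q k)) (hb : ∑ i, |b i| ≤ c)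
    (ha : ∀ i, ⟪e i, e' - ∑ j, a j • e j⟫_ℝ = 0) :
    ∑ i, |a i - b i| ≤ 4 * c * (1 + c) ^ 2 / s ^ 2 * η ^ 2 := by
  have hc : 0 ≤ c := (Finset.sum_nonneg fun i _ => abs_nonneg (b i)).trans hb
  have hη : 0 ≤ η := nonneg_of_mul_nonneg_right ((norm_nonneg _).trans he'.norm_le) hp
  set y := W *ᵥ (a - b)
  set r := ∑ i, (a - b) i • (e i - ∑ k, W k i • q k)
  set S := ∑ k, |y k|
  have hS : 0 ≤ S := Finset.sum_nonneg fun k _ => abs_nonneg (y k)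
  have hr : NearlyOrthogonal q (c * S) η r :=
    (NearlyOrthogonal.sum_smul he (a - b)).mono hη (by rw [mul_comm]; exact hW (a - b))
  have hρ : NearlyOrthogonal q ((1 + c) * p) η (e' - ∑ j, b j • e j) := by
    have h := he'.sub (NearlyOrthogonal.sum_smul he b)
    rw [sub_sub, ← sum_smul_eq_sum_mulVec_smul_add] at h
    exact h.mono hη (by linarith [mul_le_mul_of_nonneg_right hb hp.le])
  have hlower : s / 2 * S ≤ ‖∑ k, y k • q k + r‖ := by
    linarith [hq y, hr.norm_le, norm_sub_le_norm_add (∑ k, y k • q k) r,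
      mul_le_mul_of_nonneg_right hcη hS]
  have hupper : ‖∑ k, y k • q k + r‖ ^ 2 ≤ (1 + c) * ((1 + c) * p) * η ^ 2 * S := by
    have h := norm_sum_smul_sq_eq_inner_of_galerkin ha b
    rw [sum_smul_eq_sum_mulVec_smul_add q e W (a - b)] at h
    exact h.trans_le (hr.inner_sum_smul_add_le hρ)
  have hSle : S ≤ 4 * (1 + c) ^ 2 / s ^ 2 * (p * η ^ 2) := by
    rcases hS.eq_or_lt with h0 | hpos
    · rw [← h0]; positivity
    refine le_of_mul_le_mul_right ?_ hpos
    have hsq := (pow_le_pow_left₀ (by positivity) hlower 2).trans hupper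
    rw [div_mul_eq_mul_div, div_mul_eq_mul_div, le_div_iff₀ (by positivity)]
    linarith
  refine le_of_mul_le_mul_left ?_ hp
  calc p * ∑ i, |a i - b i| ≤ c * S := hW (a - b)
    _ ≤ c * (4 * (1 + c) ^ 2 / s ^ 2 * (p * η ^ 2)) := by gcongr
    _ = _ := by ring

end Galerkin

section MultiIndex

theorem eq_range_card_of_isLowerSet {s : Finset ℕ} (hs : IsLowerSet (s : Set ℕ)) :
    s = Finset.range s.card := by
  refine Finset.eq_of_subset_of_card_le (fun i hi => ?_) (Finset.card_range _).le
  have hsub : Finset.range (i + 1) ⊆ s := fun j hj =>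
    hs (Nat.lt_succ_iff.mp (Finset.mem_range.mp hj)) hi
  simpa using Finset.card_le_card hsub

theorem card_piAntidiag_univ {σ : Type*} [Fintype σ] [DecidableEq σ] (n : ℕ) :
    (Finset.piAntidiag (Finset.univ : Finset σ) n).card = (Fintype.card σ).multichoose n := by
  rw [← Finset.card_univ, ← Finset.card_finsuppAntidiag_nat_eq_multichoose, eq_comm]
  exact Finset.card_equiv Finsupp.equivFunOnFinite fun f => by simp

theorem sum_pow_div_factorial_eq_sum_piAntidiag {σ 𝕜 : Type*} [Fintype σ] [DecidableEq σ] [Field 𝕜]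
    [CharZero 𝕜] (x : σ → 𝕜) (n : ℕ) :
    (∑ t, x t) ^ n / (n.factorial : 𝕜)
      = ∑ k ∈ Finset.piAntidiag Finset.univ n, ∏ t, x t ^ k t / ((k t).factorial : 𝕜) := by
  rw [Finset.sum_pow_eq_sum_piAntidiag, Finset.sum_div]
  refine Finset.sum_congr rfl fun k hk => ?_
  have hspec := Nat.multinomial_spec Finset.univ k
  rw [(Finset.mem_piAntidiag.mp hk).1] at hspec
  have hk0 : ∏ t, ((k t).factorial : 𝕜) ≠ 0 :=
    Finset.prod_ne_zero_iff.mpr fun t _ => Nat.cast_ne_zero.mpr (k t).factorial_ne_zero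
  rw [Finset.prod_div_distrib, div_eq_div_iff (Nat.cast_ne_zero.mpr n.factorial_ne_zero) hk0,
    ← hspec]
  push_cast
  ring

/-- The multi-indices in `ℕ^d` of total degree at most `l`. -/
def multiIndices (d l : ℕ) : Finset (Fin d → ℕ) :=
  (Finset.range (l + 1)).biUnion fun n => Finset.piAntidiag Finset.univ n

theorem mem_multiIndices {d l : ℕ} {k : Fin d → ℕ} : k ∈ multiIndices d l ↔ ∑ t, k t ≤ l := by
  simp [multiIndices]

theorem pairwiseDisjoint_piAntidiag (d : ℕ) (s : Set ℕ) :
    s.PairwiseDisjoint fun n => Finset.piAntidiag (Finset.univ : Finset (Fin d)) n := by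
  intro a _ b _ hab
  refine Finset.disjoint_left.mpr fun k hk hk' => hab ?_
  exact (Finset.mem_piAntidiag.mp hk).1.symm.trans (Finset.mem_piAntidiag.mp hk').1

theorem card_multiIndices (d l : ℕ) : (multiIndices d l).card = (l + d).choose l := by
  rw [multiIndices, Finset.card_biUnion (pairwiseDisjoint_piAntidiag d _)]
  simp only [card_piAntidiag_univ, Fintype.card_fin]
  rw [Nat.sum_range_multichoose, Nat.choose_symm_add]

namespace IsMultiIndexEnum

variable {d : ℕ} {kE : ℕ → Fin d → ℕ}

theorem monotone_sum (h : IsMultiIndexEnum d kE) : Monotone fun i => ∑ t, kE i t := by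
  refine monotone_iff_forall_lt.mpr fun i j hij => ?_
  exact (h.2 i j hij).elim le_of_lt fun heq => heq.1.le

theorem preimage_multiIndices (h : IsMultiIndexEnum d kE) (l : ℕ) :
    (multiIndices d l).preimage kE h.1.1.injOn = Finset.range ((l + d).choose l) := by
  have hlower : IsLowerSet ((multiIndices d l).preimage kE h.1.1.injOn : Set ℕ) := by
    intro j i hij hj
    simp only [Finset.mem_coe, Finset.mem_preimage, mem_multiIndices] at hj ⊢
    exact (h.monotone_sum hij).trans hj
  have hcard : ((multiIndices d l).preimage kE h.1.1.injOn).card = (multiIndices d l).card := by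
    classical
    rw [Finset.card_preimage, Finset.filter_true_of_mem fun k _ => Set.mem_range.mpr (h.1.2 k)]
  rw [eq_range_card_of_isLowerSet hlower, hcard, card_multiIndices]

theorem sum_le (h : IsMultiIndexEnum d kE) (l : ℕ) (i : Fin ((l + d).choose l)) :
    ∑ t, kE i t ≤ l := by
  rw [← mem_multiIndices, ← Finset.mem_preimage (hf := h.1.1.injOn), h.preimage_multiIndices,
    Finset.mem_range]
  exact i.2

theorem injective_fin (h : IsMultiIndexEnum d kE) (l : ℕ) :
    Function.Injective fun i : Fin ((l + d).choose l) => kE i :=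
  h.1.1.comp Fin.val_injective

theorem sum_eq_sum_piAntidiag (h : IsMultiIndexEnum d kE) (l : ℕ) {G : Type*} [AddCommMonoid G]
    (f : (Fin d → ℕ) → G) :
    ∑ i : Fin ((l + d).choose l), f (kE i)
      = ∑ n ∈ Finset.range (l + 1), ∑ k ∈ Finset.piAntidiag Finset.univ n, f k := by
  rw [Fin.sum_univ_eq_sum_range (fun i => f (kE i)), ← h.preimage_multiIndices,
    Finset.sum_preimage kE _ _ f fun k _ hk => (hk (h.1.2 k)).elim, multiIndices,
    Finset.sum_biUnion (pairwiseDisjoint_piAntidiag d _)]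

end IsMultiIndexEnum

end MultiIndex

section Polynomial

open MvPolynomial

variable {σ ι R : Type*} [Fintype σ] [Fintype ι] [CommSemiring R]

/-- The polynomial `∑ i, c i * x ^ k i` with coefficients `c` on the multi-indices `k`. -/
def monomialSum (k : ι → σ → ℕ) (c : ι → R) : MvPolynomial σ R :=
  ∑ i, monomial (Finsupp.equivFunOnFinite.symm (k i)) (c i)

theorem eval_monomialSum (k : ι → σ → ℕ) (c : ι → R) (x : σ → R) :
    eval x (monomialSum k c) = ∑ i, c i * ∏ t, x t ^ k i t := by
  simp [monomialSum, eval_monomial, Finsupp.prod_fintype]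

theorem totalDegree_monomialSum_le {k : ι → σ → ℕ} {l : ℕ} (hk : ∀ i, ∑ t, k i t ≤ l)
    (c : ι → R) : (monomialSum k c).totalDegree ≤ l := by
  refine totalDegree_finsetSum_le fun i _ => (totalDegree_monomial_le _ _).trans ?_
  rw [Finsupp.sum_fintype _ _ fun _ => rfl]
  exact hk i

theorem eq_zero_of_monomialSum_eq_zero {k : ι → σ → ℕ} (hk : Function.Injective k) {c : ι → R}
    (hc : monomialSum k c = 0) : c = 0 := by
  classical
  funext i
  have hi := congrArg (coeff (Finsupp.equivFunOnFinite.symm (k i))) hc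
  simpa [monomialSum, coeff_sum, coeff_monomial, hk.eq_iff] using hi

end Polynomial

section ExpRemainder

open scoped InnerProductSpace

/-- The Taylor remainder `exp (it) - ∑ j < n, (it) ^ j / j!` of the complex exponential on the
imaginary axis. -/
def expRem (n : ℕ) (t : ℝ) : ℂ :=
  Complex.exp (Complex.I * t) - ∑ j ∈ Finset.range n, (Complex.I * t) ^ j / j.factorial

theorem continuous_expRem (n : ℕ) : Continuous (expRem n) := by
  unfold expRem
  fun_prop

theorem expRem_succ (n : ℕ) (t : ℝ) :
    expRem (n + 1) t = expRem n t - (Complex.I * t) ^ n / n.factorial := by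
  rw [expRem, expRem, Finset.sum_range_succ, sub_sub]

theorem expRem_succ_zero (n : ℕ) : expRem (n + 1) 0 = 0 := by
  simp [expRem, Finset.sum_range_succ']

theorem hasDerivAt_expRem_succ (n : ℕ) (t : ℝ) :
    HasDerivAt (expRem (n + 1)) (Complex.I * expRem n t) t := by
  have hlin : HasDerivAt (fun s : ℝ => Complex.I * s) Complex.I t := by
    simpa using Complex.ofRealCLM.hasDerivAt.const_mul Complex.I
  have hterm (j : ℕ) : HasDerivAt
      (fun s : ℝ => (Complex.I * s) ^ (j + 1) / ((j + 1).factorial : ℂ))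
      (Complex.I * ((Complex.I * t) ^ j / (j.factorial : ℂ))) t := by
    refine ((hlin.fun_pow (j + 1)).div_const ((j + 1).factorial : ℂ)).congr_deriv ?_
    rw [Nat.factorial_succ, Nat.cast_mul, Nat.add_sub_cancel, mul_assoc, mul_comm _ Complex.I,
      mul_div_mul_left _ _ (Nat.cast_ne_zero.mpr j.succ_ne_zero), mul_div_assoc]
  have hfun : expRem (n + 1) = fun s : ℝ => Complex.exp (Complex.I * s)
      - (∑ j ∈ Finset.range n, (Complex.I * s) ^ (j + 1) / ((j + 1).factorial : ℂ) + 1) := by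
    ext s
    simp [expRem, Finset.sum_range_succ']
  rw [hfun, expRem, mul_sub, Finset.mul_sum, mul_comm]
  exact hlin.cexp.fun_sub ((HasDerivAt.fun_sum fun j _ => hterm j).add_const 1)

theorem norm_expRem_le (n : ℕ) (t : ℝ) : ‖expRem n t‖ ≤ |t| ^ n := by
  induction n generalizing t with
  | zero => simp [expRem, Complex.norm_exp_I_mul_ofReal]
  | succ n ih =>
    have hderiv : ∀ s ∈ Metric.closedBall (0 : ℝ) |t|, ‖Complex.I * expRem n s‖ ≤ |t| ^ n := by
      intro s hs
      rw [norm_mul, Complex.norm_I, one_mul]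
      exact (ih s).trans (pow_le_pow_left₀ (abs_nonneg s) (by simpa using hs) n)
    have h := (convex_closedBall (0 : ℝ) |t|).norm_image_sub_le_of_norm_hasDerivWithin_le
      (fun s _ => (hasDerivAt_expRem_succ n s).hasDerivWithinAt) hderiv
      (Metric.mem_closedBall_self (abs_nonneg t)) (y := t) (by simp)
    simpa [expRem_succ_zero, pow_succ] using h

theorem norm_expRem_succ_le (n : ℕ) (t : ℝ) : ‖expRem (n + 1) t‖ ≤ 2 * |t| ^ n := by
  have hterm : ‖(Complex.I * t) ^ n / (n.factorial : ℂ)‖ ≤ |t| ^ n := by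
    simpa using div_le_self (pow_nonneg (abs_nonneg t) n)
      (Nat.one_le_cast.mpr (Nat.one_le_iff_ne_zero.mpr n.factorial_ne_zero))
  rw [expRem_succ]
  linarith [norm_sub_le (expRem n t) ((Complex.I * t) ^ n / n.factorial), norm_expRem_le n t]

theorem norm_expRem_succ_sq_le (n : ℕ) (t : ℝ) :
    ‖expRem (n + 1) t‖ ^ 2 ≤ 4 * |t| ^ (2 * n) * min 1 (|t| ^ 2) := by
  have hsmall := pow_le_pow_left₀ (norm_nonneg _) (norm_expRem_le (n + 1) t) 2
  have hlarge := pow_le_pow_left₀ (norm_nonneg _) (norm_expRem_succ_le n t) 2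
  rw [mul_min_of_nonneg _ _ (by positivity), mul_one]
  refine le_min (hlarge.trans_eq (by ring)) (hsmall.trans ?_)
  have : 0 ≤ (|t| ^ n * |t|) ^ 2 := by positivity
  linarith [show (|t| ^ (n + 1)) ^ 2 = (|t| ^ n * |t|) ^ 2 by ring,
    show 4 * |t| ^ (2 * n) * |t| ^ 2 = 4 * (|t| ^ n * |t|) ^ 2 by ring]

-- The Taylor term of degree `n + 1` is orthogonal to `I ^ n` in `ℂ`.
theorem inner_I_pow_expRem_succ (n : ℕ) (t : ℝ) :
    ⟪Complex.I ^ n, expRem (n + 1) t⟫_ℝ = ⟪Complex.I ^ n, expRem (n + 2) t⟫_ℝ := by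
  have hperp : ⟪Complex.I ^ n, (Complex.I * t) ^ (n + 1) / ((n + 1).factorial : ℂ)⟫_ℝ = 0 := by
    have : (Complex.I * t) ^ (n + 1) / ((n + 1).factorial : ℂ)
        = Complex.I ^ n * (Complex.I * (t ^ (n + 1) / (n + 1).factorial : ℝ)) := by
      push_cast
      ring
    rw [this, Complex.inner, mul_right_comm, Complex.mul_conj, Complex.re_ofReal_mul,
      Complex.I_mul_re, Complex.ofReal_im, neg_zero, mul_zero]
  rw [expRem_succ (n + 1), inner_sub_right, hperp, sub_zero]

theorem abs_inner_I_pow_expRem_succ_le (n : ℕ) (t : ℝ) :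
    |⟪Complex.I ^ n, expRem (n + 1) t⟫_ℝ| ≤ 2 * |t| ^ n * min 1 (|t| ^ 2) := by
  have hnorm (m : ℕ) : |⟪Complex.I ^ n, expRem m t⟫_ℝ| ≤ ‖expRem m t‖ := by
    simpa using abs_real_inner_le_norm (Complex.I ^ n) (expRem m t)
  rw [mul_min_of_nonneg _ _ (by positivity), mul_one]
  refine le_min ((hnorm _).trans (norm_expRem_succ_le n t)) ?_
  rw [inner_I_pow_expRem_succ]
  refine (hnorm _).trans ((norm_expRem_le (n + 2) t).trans ?_)
  rw [pow_add]
  linarith [show 0 ≤ |t| ^ n * |t| ^ 2 by positivity]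

end ExpRemainder

section PlaneWaves

variable {σ : Type*} [Fintype σ]

/-- The Taylor term `(iξ)^k / k!` of the plane waves. -/
def waveMonomial (k : σ → ℕ) (ξ : σ → ℝ) : ℂ :=
  ∏ t, (Complex.I * ξ t) ^ k t / ((k t).factorial : ℂ)

/-- The plane wave `ξ ↦ exp (i⟨y, ξ⟩)`. -/
def planeWave (y ξ : σ → ℝ) : ℂ :=
  Complex.exp (Complex.I * (y ⬝ᵥ ξ : ℝ))

theorem continuous_waveMonomial (k : σ → ℕ) : Continuous (waveMonomial k) := by
  unfold waveMonomial
  fun_prop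

theorem continuous_planeWave (y : σ → ℝ) : Continuous (planeWave y) := by
  unfold planeWave dotProduct
  fun_prop

theorem norm_planeWave (y ξ : σ → ℝ) : ‖planeWave y ξ‖ = 1 :=
  Complex.norm_exp_I_mul_ofReal _

theorem norm_waveMonomial_le (k : σ → ℕ) (ξ : σ → ℝ) : ‖waveMonomial k ξ‖ ≤ ‖ξ‖ ^ ∑ t, k t := by
  rw [waveMonomial, norm_prod, ← Finset.prod_pow_eq_pow_sum]
  refine Finset.prod_le_prod (fun _ _ => norm_nonneg _) fun t _ => ?_
  rw [norm_div, norm_pow, norm_mul, Complex.norm_I, one_mul, Complex.norm_real,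
    Complex.norm_natCast]
  refine (div_le_self (by positivity) ?_).trans
    (pow_le_pow_left₀ (norm_nonneg _) (norm_le_pi_norm ξ t) _)
  exact Nat.one_le_cast.mpr (k t).factorial_pos

theorem waveMonomial_eq_I_pow_mul (k : σ → ℕ) (ξ : σ → ℝ) :
    waveMonomial k ξ
      = ((∏ t, ξ t ^ k t / (k t).factorial : ℝ) : ℂ) * Complex.I ^ ∑ t, k t := by
  push_cast
  rw [waveMonomial, ← Finset.prod_pow_eq_pow_sum, ← Finset.prod_mul_distrib]
  refine Finset.prod_congr rfl fun t _ => ?_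
  ring

theorem planeWave_eq_sum_vVec_add_expRem {d : ℕ} {kE : ℕ → Fin d → ℕ} (h : IsMultiIndexEnum d kE)
    (l : ℕ) (y ξ : Fin d → ℝ) :
    planeWave y ξ = ∑ i : Fin ((l + d).choose l), vVec kE _ y i • waveMonomial (kE i) ξ
      + expRem (l + 1) (y ⬝ᵥ ξ) := by
  have hterm (n : ℕ) : (Complex.I * (y ⬝ᵥ ξ : ℝ)) ^ n / n.factorial
      = ∑ k ∈ Finset.piAntidiag Finset.univ n, (∏ t, y t ^ k t) • waveMonomial k ξ := by
    have hsum : Complex.I * (y ⬝ᵥ ξ : ℝ) = ∑ t, (y t : ℂ) * (Complex.I * ξ t) := by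
      rw [dotProduct, Complex.ofReal_sum, Finset.mul_sum]
      refine Finset.sum_congr rfl fun t _ => ?_
      push_cast
      ring
    rw [hsum, sum_pow_div_factorial_eq_sum_piAntidiag]
    refine Finset.sum_congr rfl fun k _ => ?_
    rw [Complex.real_smul, Complex.ofReal_prod, waveMonomial, ← Finset.prod_mul_distrib]
    refine Finset.prod_congr rfl fun t _ => ?_
    rw [mul_pow, mul_div_assoc, Complex.ofReal_pow]
  simp only [vVec]
  rw [h.sum_eq_sum_piAntidiag l fun k => (∏ t, y t ^ k t) • waveMonomial k ξ, expRem, planeWave]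
  simp only [hterm, add_sub_cancel]

theorem linearIndependent_waveMonomial {ι : Type*} [Finite ι] {k : ι → σ → ℕ}
    (hk : Function.Injective k) : LinearIndependent ℝ fun i => waveMonomial (k i) := by
  cases nonempty_fintype ι
  rw [Fintype.linearIndependent_iff]
  intro c hc
  let a : ι → ℂ := fun i => ∏ t, Complex.I ^ k i t / ((k i t).factorial : ℂ)
  have ha (i : ι) : a i ≠ 0 := Finset.prod_ne_zero_iff.mpr fun t _ =>
    div_ne_zero (pow_ne_zero _ Complex.I_ne_zero) (Nat.cast_ne_zero.mpr (Nat.factorial_ne_zero _))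
  have hpoly : monomialSum k (fun i => c i * a i) = 0 := by
    refine MvPolynomial.funext_set (fun _ => Set.range ((↑) : ℝ → ℂ))
      (fun _ => Set.infinite_range_of_injective Complex.ofReal_injective) fun x hx => ?_
    choose ξ hξ using fun t => hx t (Set.mem_univ t)
    obtain rfl : (fun t => (ξ t : ℂ)) = x := funext hξ
    rw [map_zero, eval_monomialSum]
    refine Eq.trans ?_ (congrFun hc ξ)
    rw [Finset.sum_apply]
    refine Finset.sum_congr rfl fun i _ => ?_
    rw [Pi.smul_apply, Complex.real_smul, waveMonomial, mul_assoc, ← Finset.prod_mul_distrib]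
    refine congrArg _ (Finset.prod_congr rfl fun t _ => ?_)
    ring
  intro i
  have hi := congrFun (eq_zero_of_monomialSum_eq_zero hk hpoly) i
  exact Complex.ofReal_eq_zero.mp ((mul_eq_zero.mp hi).resolve_right (ha i))

/-- The plane wave `planeWave y` as a character of the additive group `σ → ℝ`. -/
def planeWaveHom (y : σ → ℝ) : Multiplicative (σ → ℝ) →* ℂ where
  toFun ξ := planeWave y ξ.toAdd
  map_one' := by simp [planeWave]
  map_mul' ξ η := by simp [planeWave, dotProduct_add, mul_add, Complex.exp_add]

theorem planeWave_injective : Function.Injective (planeWave (σ := σ)) := by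
  classical
  intro y z hyz
  by_contra hne
  obtain ⟨t, ht⟩ := Function.ne_iff.mp hne
  have hsub : y t - z t ≠ 0 := sub_ne_zero.mpr ht
  let s : ℝ := Real.pi / (y t - z t)
  have heq : planeWave y (Pi.single t s) = planeWave z (Pi.single t s) := by rw [hyz]
  have hpi : Complex.I * ((y t * s : ℝ) : ℂ)
      = Complex.I * ((z t * s : ℝ) : ℂ) + Real.pi * Complex.I := by
    have : y t * s = z t * s + Real.pi := by
      rw [← sub_eq_iff_eq_add', ← sub_mul, mul_div_cancel₀ _ hsub]
    rw [this]
    push_cast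
    ring
  rw [planeWave, planeWave, dotProduct_single, dotProduct_single, hpi, Complex.exp_add,
    Complex.exp_pi_mul_I, mul_neg_one] at heq
  exact Complex.exp_ne_zero _ (self_eq_neg.mp heq.symm)

theorem linearIndependent_planeWave {ι : Type*} {y : ι → σ → ℝ} (hy : Function.Injective y) :
    LinearIndependent ℝ fun i => planeWave (y i) := by
  have hinj : Function.Injective fun i => planeWaveHom (y i) := fun i j hij =>
    hy (planeWave_injective (congrArg DFunLike.coe hij))
  exact ((linearIndependent_monoidHom _ ℂ).comp _ hinj).restrict_scalars' ℝ

theorem inner_planeWave (y z ξ : σ → ℝ) :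
    inner ℝ (planeWave y ξ) (planeWave z ξ) = Real.cos ((y - z) ⬝ᵥ ξ) := by
  have harg : Complex.I * (z ⬝ᵥ ξ : ℝ) + (starRingEnd ℂ) (Complex.I * (y ⬝ᵥ ξ : ℝ))
      = ((-((y - z) ⬝ᵥ ξ) : ℝ) : ℂ) * Complex.I := by
    rw [map_mul, Complex.conj_I, Complex.conj_ofReal, sub_dotProduct]
    push_cast
    ring
  rw [Complex.inner, planeWave, planeWave, ← Complex.exp_conj, ← Complex.exp_add, harg,
    Complex.exp_ofReal_mul_I_re, Real.cos_neg]

end PlaneWaves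

section SpectralMeasure

/-- The spectral density `(1 + ‖ξ‖₂²)^{-(α + d/2)}` of the Matérn kernel. -/
def maternWeight (α : ℝ) (d : ℕ) (ξ : Fin d → ℝ) : ℝ :=
  (1 + ∑ j, ξ j ^ 2) ^ (-(α + (d : ℝ) / 2))

/-- The spectral measure of the Matérn kernel. -/
def maternMeasure (α : ℝ) (d : ℕ) : Measure (Fin d → ℝ) :=
  volume.withDensity fun ξ => ENNReal.ofReal (maternWeight α d ξ)

variable {α : ℝ} {d : ℕ}

theorem maternWeight_pos (ξ : Fin d → ℝ) : 0 < maternWeight α d ξ := by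
  unfold maternWeight
  positivity

theorem continuous_maternWeight : Continuous (maternWeight α d) := by
  unfold maternWeight
  refine Continuous.rpow_const (by fun_prop) fun ξ => Or.inl ?_
  positivity

theorem norm_sq_le_sum_sq (ξ : Fin d → ℝ) : ‖ξ‖ ^ 2 ≤ ∑ j, ξ j ^ 2 := by
  rw [← Real.le_sqrt (norm_nonneg ξ) (Finset.sum_nonneg fun _ _ => sq_nonneg _),
    pi_norm_le_iff_of_nonneg (Real.sqrt_nonneg _)]
  intro j
  refine Real.le_sqrt_of_sq_le ?_
  rw [Real.norm_eq_abs, sq_abs]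
  exact Finset.single_le_sum (f := fun j => ξ j ^ 2) (fun _ _ => sq_nonneg _) (Finset.mem_univ j)

theorem maternWeight_le_one_add_norm_rpow (hα : 0 < α) (ξ : Fin d → ℝ) :
    maternWeight α d ξ ≤ 2 ^ ((2 * α + d) / 2) * (1 + ‖ξ‖) ^ (-(2 * α + d)) := by
  refine le_trans ?_ (rpow_neg_one_add_norm_sq_le ξ (by positivity : 0 < 2 * α + d))
  rw [maternWeight, show -(α + (d : ℝ) / 2) = -(2 * α + d) / 2 by ring]
  refine Real.rpow_le_rpow_of_nonpos (by positivity) (by linarith [norm_sq_le_sum_sq ξ]) ?_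
  linarith [d.cast_nonneg (α := ℝ)]

theorem maternWeight_le_norm_rpow (hα : 0 < α) {ξ : Fin d → ℝ} (hξ : ξ ≠ 0) :
    maternWeight α d ξ ≤ ‖ξ‖ ^ (-(2 * α + d)) := by
  have hnorm : 0 < ‖ξ‖ := norm_pos_iff.mpr hξ
  calc maternWeight α d ξ ≤ (‖ξ‖ ^ 2) ^ (-(α + (d : ℝ) / 2)) :=
        Real.rpow_le_rpow_of_nonpos (by positivity) (by linarith [norm_sq_le_sum_sq ξ])
          (by linarith [d.cast_nonneg (α := ℝ)])
    _ = ‖ξ‖ ^ (-(2 * α + d)) := by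
      rw [← Real.rpow_natCast_mul hnorm.le]
      push_cast
      ring_nf

theorem integrable_maternMeasure_iff {f : (Fin d → ℝ) → ℝ} :
    Integrable f (maternMeasure α d) ↔ Integrable fun ξ => f ξ * maternWeight α d ξ := by
  rw [maternMeasure, integrable_withDensity_iff
    continuous_maternWeight.measurable.ennreal_ofReal (.of_forall fun _ => ENNReal.ofReal_lt_top)]
  simp only [ENNReal.toReal_ofReal (maternWeight_pos _).le]

theorem integral_maternMeasure (f : (Fin d → ℝ) → ℝ) :
    ∫ ξ, f ξ ∂maternMeasure α d = ∫ ξ, f ξ * maternWeight α d ξ := by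
  rw [maternMeasure, integral_withDensity_eq_integral_toReal_smul
    continuous_maternWeight.measurable.ennreal_ofReal (.of_forall fun _ => ENNReal.ofReal_lt_top)]
  simp only [ENNReal.toReal_ofReal (maternWeight_pos _).le, smul_eq_mul, mul_comm]

instance isOpenPosMeasure_maternMeasure : (maternMeasure α d).IsOpenPosMeasure :=
  (withDensity_absolutelyContinuous' continuous_maternWeight.measurable.ennreal_ofReal.aemeasurable
    (.of_forall fun ξ => (ENNReal.ofReal_pos.mpr (maternWeight_pos ξ)).ne')).isOpenPosMeasure

theorem integrable_one_add_norm_rpow {s : ℝ} (hα : 0 < α) (hs : s < 2 * α) :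
    Integrable (fun ξ => (1 + ‖ξ‖) ^ s) (maternMeasure α d) := by
  rw [integrable_maternMeasure_iff]
  have hdom : Integrable fun ξ : Fin d → ℝ =>
      2 ^ ((2 * α + d) / 2) * (1 + ‖ξ‖) ^ (-(2 * α + d - s)) := by
    refine (integrable_one_add_norm ?_).const_mul _
    rw [Module.finrank_fin_fun]
    linarith
  have hcont : Continuous fun ξ : Fin d → ℝ => (1 + ‖ξ‖) ^ s :=
    (by fun_prop : Continuous fun ξ : Fin d → ℝ => 1 + ‖ξ‖).rpow_const fun ξ =>
      Or.inl (by positivity)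
  refine hdom.mono' (hcont.mul continuous_maternWeight).aestronglyMeasurable
    (.of_forall fun ξ => ?_)
  have hbase : 0 < 1 + ‖ξ‖ := by positivity
  rw [Real.norm_of_nonneg (mul_nonneg (by positivity) (maternWeight_pos ξ).le), neg_sub,
    sub_eq_add_neg, Real.rpow_add hbase, mul_left_comm]
  gcongr
  exact maternWeight_le_one_add_norm_rpow hα ξ

theorem integrable_one_add_norm_pow {n : ℕ} (hn : (n : ℝ) < 2 * α) :
    Integrable (fun ξ => (1 + ‖ξ‖) ^ n) (maternMeasure α d) := by
  have hα : 0 < α := by linarith [n.cast_nonneg (α := ℝ)]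
  simpa using integrable_one_add_norm_rpow hα hn

end SpectralMeasure

section PolynomialGrowth

open scoped InnerProductSpace

/-- The continuous functions `E → ℂ` of growth at most `(1 + ‖ξ‖) ^ l`. -/
def growthSpace (E : Type*) [NormedAddCommGroup E] (l : ℕ) : Submodule ℝ (E → ℂ) where
  carrier := {f | Continuous f ∧ ∃ C : ℝ, ∀ ξ, ‖f ξ‖ ≤ C * (1 + ‖ξ‖) ^ l}
  zero_mem' := ⟨continuous_const, 0, fun ξ => by simp⟩
  add_mem' := by
    rintro f g ⟨hf, C, hC⟩ ⟨hg, C', hC'⟩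
    refine ⟨hf.add hg, C + C', fun ξ => ?_⟩
    rw [add_mul]
    exact (norm_add_le _ _).trans (add_le_add (hC ξ) (hC' ξ))
  smul_mem' := by
    rintro c f ⟨hf, C, hC⟩
    refine ⟨hf.const_smul c, |c| * C, fun ξ => ?_⟩
    rw [Pi.smul_apply, norm_smul, Real.norm_eq_abs, mul_assoc]
    exact mul_le_mul_of_nonneg_left (hC ξ) (abs_nonneg c)

theorem planeWave_mem_growthSpace {σ : Type*} [Fintype σ] (l : ℕ) (y : σ → ℝ) :
    planeWave y ∈ growthSpace (σ → ℝ) l := by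
  refine ⟨continuous_planeWave y, 1, fun ξ => ?_⟩
  rw [norm_planeWave, one_mul]
  exact one_le_pow₀ (by linarith [norm_nonneg ξ])

theorem waveMonomial_mem_growthSpace {σ : Type*} [Fintype σ] {l : ℕ} {k : σ → ℕ}
    (hk : ∑ t, k t ≤ l) : waveMonomial k ∈ growthSpace (σ → ℝ) l := by
  refine ⟨continuous_waveMonomial k, 1, fun ξ => ?_⟩
  rw [one_mul]
  refine (norm_waveMonomial_le k ξ).trans ?_
  exact (pow_le_pow_left₀ (norm_nonneg ξ) (by linarith) _).trans
    (pow_le_pow_right₀ (by linarith [norm_nonneg ξ]) hk)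

variable {α : ℝ} {d l : ℕ}

theorem memLp_of_mem_growthSpace (hl : (l : ℝ) < α) {f : (Fin d → ℝ) → ℂ}
    (hf : f ∈ growthSpace (Fin d → ℝ) l) : MemLp f 2 (maternMeasure α d) := by
  obtain ⟨hcont, C, hC⟩ := hf
  have hmeas := hcont.aestronglyMeasurable (μ := maternMeasure α d)
  refine (memLp_two_iff_integrable_sq_norm hmeas).mpr ?_
  have hdom : Integrable (fun ξ => C ^ 2 * (1 + ‖ξ‖) ^ (2 * l)) (maternMeasure α d) :=
    (integrable_one_add_norm_pow (by push_cast; linarith)).const_mul _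
  refine hdom.mono' (by fun_prop) (.of_forall fun ξ => ?_)
  rw [Real.norm_of_nonneg (sq_nonneg _), mul_comm 2 l, pow_mul, ← mul_pow]
  exact pow_le_pow_left₀ (norm_nonneg _) (hC ξ) 2

/-- The class in `L²` of a function of moderate growth. -/
def toSpectralL2 (hl : (l : ℝ) < α) :
    growthSpace (Fin d → ℝ) l →ₗ[ℝ] Lp ℂ 2 (maternMeasure α d) where
  toFun f := (memLp_of_mem_growthSpace hl f.2).toLp f
  map_add' f g := MemLp.toLp_add (memLp_of_mem_growthSpace hl f.2) (memLp_of_mem_growthSpace hl g.2)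
  map_smul' c f := MemLp.toLp_const_smul c (memLp_of_mem_growthSpace hl f.2)

theorem coeFn_toSpectralL2 (hl : (l : ℝ) < α) (f : growthSpace (Fin d → ℝ) l) :
    toSpectralL2 hl f =ᵐ[maternMeasure α d] f.1 :=
  (memLp_of_mem_growthSpace hl f.2).coeFn_toLp

theorem toSpectralL2_injective (hl : (l : ℝ) < α) :
    Function.Injective (toSpectralL2 (d := d) hl) := by
  intro f g hfg
  have hae : f.1 =ᵐ[maternMeasure α d] g.1 := by
    refine (coeFn_toSpectralL2 hl f).symm.trans ?_
    rw [hfg]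
    exact coeFn_toSpectralL2 hl g
  exact Subtype.ext ((f.2.1.ae_eq_iff_eq _ g.2.1).mp hae)

theorem inner_toSpectralL2 (hl : (l : ℝ) < α) (f g : growthSpace (Fin d → ℝ) l) :
    ⟪toSpectralL2 hl f, toSpectralL2 hl g⟫_ℝ = ∫ ξ, ⟪f.1 ξ, g.1 ξ⟫_ℝ ∂maternMeasure α d := by
  rw [L2.inner_def]
  refine integral_congr_ae ?_
  filter_upwards [coeFn_toSpectralL2 hl f, coeFn_toSpectralL2 hl g] with ξ hf hg
  rw [hf, hg]

theorem linearIndependent_toSpectralL2 (hl : (l : ℝ) < α) {ι : Type*}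
    {f : ι → growthSpace (Fin d → ℝ) l} (hf : LinearIndependent ℝ fun i => (f i).1) :
    LinearIndependent ℝ fun i => toSpectralL2 hl (f i) :=
  (LinearIndependent.of_comp (growthSpace _ l).subtype hf).map'
    _ (LinearMap.ker_eq_bot.mpr (toSpectralL2_injective hl))

/-- The plane wave with frequency `y` in the spectral `L²` space. -/
def waveL2 (hl : (l : ℝ) < α) (y : Fin d → ℝ) : Lp ℂ 2 (maternMeasure α d) :=
  toSpectralL2 hl ⟨planeWave y, planeWave_mem_growthSpace l y⟩

/-- The Taylor term `waveMonomial k` in the spectral `L²` space. -/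
def monomialL2 (hl : (l : ℝ) < α) (k : Fin d → ℕ) (hk : ∑ t, k t ≤ l) :
    Lp ℂ 2 (maternMeasure α d) :=
  toSpectralL2 hl ⟨waveMonomial k, waveMonomial_mem_growthSpace hk⟩

theorem inner_waveL2 (hl : (l : ℝ) < α) (y z : Fin d → ℝ) :
    ⟪waveL2 hl y, waveL2 hl z⟫_ℝ = matern α d (y - z) := by
  rw [waveL2, waveL2, inner_toSpectralL2, integral_maternMeasure]
  simp only [inner_planeWave]
  rfl

theorem linearIndependent_waveL2 (hl : (l : ℝ) < α) {ι : Type*} {y : ι → Fin d → ℝ}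
    (hy : Function.Injective y) : LinearIndependent ℝ fun i => waveL2 hl (y i) :=
  linearIndependent_toSpectralL2 hl (linearIndependent_planeWave hy)

theorem linearIndependent_monomialL2 (hl : (l : ℝ) < α) {ι : Type*} [Finite ι]
    {k : ι → Fin d → ℕ} (hk : Function.Injective k) (hkl : ∀ i, ∑ t, k i t ≤ l) :
    LinearIndependent ℝ fun i => monomialL2 hl (k i) (hkl i) :=
  linearIndependent_toSpectralL2 hl (linearIndependent_waveMonomial hk)

theorem isUnit_det_maternMat (hα : 0 < α) {n : ℕ} {w : Fin n → Fin d → ℝ}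
    (hw : Function.Injective w) : IsUnit (maternMat α d w).det := by
  have hl : ((0 : ℕ) : ℝ) < α := by simpa using hα
  have hgram : maternMat α d w = Matrix.gram ℝ fun i => waveL2 hl (w i) := by
    ext i j
    rw [Matrix.gram_apply, inner_waveL2, maternMat, Matrix.of_apply]
  rw [hgram]
  exact (Matrix.posDef_gram_of_linearIndependent
    (linearIndependent_waveL2 hl hw)).det_pos.ne'.isUnit

end PolynomialGrowth

section TruncatedMoment

/-- The truncated spectral moment `∫ ‖ξ‖^{2l} min(1, (τ‖ξ‖)²)` which controls the `L²` norms of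
the Taylor remainders of plane waves with frequencies of size `τ`. -/
def truncMoment (α : ℝ) (d l : ℕ) (τ : ℝ) : ℝ :=
  ∫ ξ, ‖ξ‖ ^ (2 * l) * min 1 ((τ * ‖ξ‖) ^ 2) ∂maternMeasure α d

theorem integrable_norm_rpow_mul_min_one_sq {E : Type*} [NormedAddCommGroup E] [NormedSpace ℝ E]
    [FiniteDimensional ℝ E] [MeasurableSpace E] [BorelSpace E] (μ : Measure E) [μ.IsAddHaarMeasure]
    {s : ℝ} (hs : 0 < s) (hs' : s < 2) :
    Integrable (fun x : E => ‖x‖ ^ (-(Module.finrank ℝ E + s)) * min 1 (‖x‖ ^ 2)) μ := by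
  rcases subsingleton_or_nontrivial E with hE | hE
  · refine (integrable_zero E ℝ μ).congr (.of_forall fun x => ?_)
    simp [Subsingleton.elim x 0]
  rw [integrable_fun_norm_addHaar μ
    (f := fun r : ℝ => r ^ (-(Module.finrank ℝ E + s)) * min 1 (r ^ 2))]
  have hradial {r : ℝ} (hr : 0 < r) : r ^ (Module.finrank ℝ E - 1)
      • (r ^ (-(Module.finrank ℝ E + s)) * min 1 (r ^ 2)) = r ^ (-1 - s) * min 1 (r ^ 2) := by
    rw [smul_eq_mul, ← mul_assoc, ← Real.rpow_natCast, ← Real.rpow_add hr,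
      Nat.cast_sub (Nat.one_le_iff_ne_zero.mpr Module.finrank_pos.ne')]
    push_cast
    ring_nf
  rw [← Set.Ioc_union_Ioi_eq_Ioi (zero_le_one' ℝ)]
  refine IntegrableOn.union ?_ ?_
  · have hint : IntegrableOn (fun r : ℝ => r ^ (1 - s)) (Set.Ioc 0 1) :=
      (intervalIntegrable_iff_integrableOn_Ioc_of_le zero_le_one).mp
        (intervalIntegral.intervalIntegrable_rpow' (by linarith))
    refine hint.congr_fun (fun r hr => ?_) measurableSet_Ioc
    dsimp only
    rw [hradial hr.1, min_eq_right (pow_le_one₀ hr.1.le hr.2), ← Real.rpow_natCast r 2,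
      ← Real.rpow_add hr.1]
    push_cast
    ring_nf
  · have hint : IntegrableOn (fun r : ℝ => r ^ (-1 - s)) (Set.Ioi 1) :=
      integrableOn_Ioi_rpow_of_lt (by linarith) zero_lt_one
    refine hint.congr_fun (fun r hr => ?_) measurableSet_Ioi
    dsimp only
    rw [hradial (zero_lt_one.trans hr), min_eq_left (one_le_pow₀ (le_of_lt hr)), mul_one]

variable {α : ℝ} {d l : ℕ}

theorem integrable_norm_pow_mul_min (hl : (l : ℝ) < α) (τ : ℝ) :
    Integrable (fun ξ => ‖ξ‖ ^ (2 * l) * min 1 ((τ * ‖ξ‖) ^ 2)) (maternMeasure α d) := by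
  refine (integrable_one_add_norm_pow (n := 2 * l) (by push_cast; linarith)).mono'
    (by fun_prop) (.of_forall fun ξ => ?_)
  rw [Real.norm_of_nonneg (by positivity)]
  refine (mul_le_of_le_one_right (by positivity) (min_le_left _ _)).trans ?_
  exact pow_le_pow_left₀ (norm_nonneg ξ) (by linarith) _

theorem truncMoment_nonneg (τ : ℝ) : 0 ≤ truncMoment α d l τ :=
  integral_nonneg fun ξ => by positivity

theorem norm_pow_mul_min_mul_maternWeight_le (hα : 0 < α) {τ : ℝ} (hτ : 0 < τ) (ξ : Fin d → ℝ) :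
    ‖ξ‖ ^ (2 * l) * min 1 ((τ * ‖ξ‖) ^ 2) * maternWeight α d ξ ≤
      τ ^ (d + 2 * (α - l)) * (‖τ • ξ‖ ^ (-(d + 2 * (α - l))) * min 1 (‖τ • ξ‖ ^ 2)) := by
  rw [norm_smul, Real.norm_of_nonneg hτ.le]
  rcases eq_or_ne ξ 0 with rfl | hξ
  · simp
  have hnorm : 0 < ‖ξ‖ := norm_pos_iff.mpr hξ
  calc ‖ξ‖ ^ (2 * l) * min 1 ((τ * ‖ξ‖) ^ 2) * maternWeight α d ξ
      ≤ ‖ξ‖ ^ (2 * l) * min 1 ((τ * ‖ξ‖) ^ 2) * ‖ξ‖ ^ (-(2 * α + d)) := by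
        gcongr
        exact maternWeight_le_norm_rpow hα hξ
    _ = ‖ξ‖ ^ (2 * l) * ‖ξ‖ ^ (-(2 * α + d)) * min 1 ((τ * ‖ξ‖) ^ 2) := by ring
    _ = ‖ξ‖ ^ (-(d + 2 * (α - l))) * min 1 ((τ * ‖ξ‖) ^ 2) := by
        rw [← Real.rpow_natCast ‖ξ‖, ← Real.rpow_add hnorm]
        push_cast
        ring_nf
    _ = _ := by
        rw [← mul_assoc, Real.mul_rpow hτ.le hnorm.le, ← mul_assoc, ← Real.rpow_add hτ,
          add_neg_cancel, Real.rpow_zero, one_mul]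

theorem exists_truncMoment_le_rpow (hl : (l : ℝ) < α) (hl' : α < l + 1) :
    ∃ C, 0 ≤ C ∧ ∀ τ, 0 < τ → truncMoment α d l τ ≤ C * τ ^ (2 * (α - l)) := by
  have hα : 0 < α := l.cast_nonneg.trans_lt hl
  let g : (Fin d → ℝ) → ℝ := fun ξ => ‖ξ‖ ^ (-(d + 2 * (α - l))) * min 1 (‖ξ‖ ^ 2)
  have hg : Integrable g := by
    simpa [g] using integrable_norm_rpow_mul_min_one_sq (volume : Measure (Fin d → ℝ))
      (s := 2 * (α - l)) (by linarith) (by linarith)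
  refine ⟨∫ ξ, g ξ, integral_nonneg fun ξ => by positivity, fun τ hτ => ?_⟩
  calc truncMoment α d l τ ≤ ∫ ξ, τ ^ (d + 2 * (α - l)) * g (τ • ξ) := by
        rw [truncMoment, integral_maternMeasure]
        exact integral_mono (integrable_maternMeasure_iff.mp (integrable_norm_pow_mul_min hl τ))
          ((hg.comp_smul hτ.ne').const_mul _) fun ξ => norm_pow_mul_min_mul_maternWeight_le hα hτ ξ
    _ = (∫ ξ, g ξ) * τ ^ (2 * (α - l)) := by
        rw [integral_const_mul, Measure.integral_comp_smul, Module.finrank_fin_fun, smul_eq_mul,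
          abs_of_pos (by positivity), Real.rpow_add hτ, Real.rpow_natCast]
        field_simp

theorem min_one_sq_le {s : ℝ} (hs : 0 ≤ s) : min 1 (s ^ 2) ≤ s := by
  rcases le_total s 1 with h | h
  · exact (min_le_right _ _).trans (pow_le_of_le_one hs h two_ne_zero)
  · exact (min_le_left _ _).trans h

theorem exists_truncMoment_le_mul (hl : l + 1 ≤ α) :
    ∃ C, 0 ≤ C ∧ ∀ τ, 0 < τ → truncMoment α d l τ ≤ C * τ := by
  refine ⟨∫ ξ, (1 + ‖ξ‖) ^ (2 * l + 1) ∂maternMeasure α d, integral_nonneg fun ξ => by positivity,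
    fun τ hτ => ?_⟩
  rw [truncMoment, ← integral_mul_const]
  refine integral_mono (integrable_norm_pow_mul_min (by linarith) τ)
    ((integrable_one_add_norm_pow (by push_cast; linarith)).mul_const _) fun ξ => ?_
  calc ‖ξ‖ ^ (2 * l) * min 1 ((τ * ‖ξ‖) ^ 2) ≤ ‖ξ‖ ^ (2 * l) * (τ * ‖ξ‖) := by
        gcongr
        exact min_one_sq_le (by positivity)
    _ = ‖ξ‖ ^ (2 * l + 1) * τ := by ring
    _ ≤ (1 + ‖ξ‖) ^ (2 * l + 1) * τ := by
        gcongr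
        linarith

theorem exists_truncMoment_le (hl : (l : ℝ) < α) :
    ∃ C, 0 ≤ C ∧ ∀ τ, 0 < τ → truncMoment α d l τ ≤ C * (τ ^ (2 * (α - l)) + τ) := by
  rcases lt_or_ge α (l + 1) with h | h
  · obtain ⟨C, hC, hmom⟩ := exists_truncMoment_le_rpow (d := d) hl h
    exact ⟨C, hC, fun τ hτ => (hmom τ hτ).trans (by gcongr; linarith)⟩
  · obtain ⟨C, hC, hmom⟩ := exists_truncMoment_le_mul (d := d) h
    exact ⟨C, hC, fun τ hτ => (hmom τ hτ).trans (by
      gcongr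
      linarith [Real.rpow_nonneg hτ.le (2 * (α - l))])⟩

end TruncatedMoment

section WaveRemainder

open scoped InnerProductSpace

theorem abs_dotProduct_le {σ : Type*} [Fintype σ] (y ξ : σ → ℝ) :
    |y ⬝ᵥ ξ| ≤ Fintype.card σ * ‖y‖ * ‖ξ‖ := by
  calc |y ⬝ᵥ ξ| ≤ ∑ t, |y t * ξ t| := Finset.abs_sum_le_sum_abs _ _
    _ ≤ ∑ _t : σ, ‖y‖ * ‖ξ‖ := by
        refine Finset.sum_le_sum fun t _ => ?_
        rw [abs_mul]
        exact mul_le_mul (norm_le_pi_norm y t) (norm_le_pi_norm ξ t) (abs_nonneg _) (norm_nonneg y)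
    _ = Fintype.card σ * ‖y‖ * ‖ξ‖ := by simp [mul_assoc]

theorem expRem_dotProduct_mem_growthSpace {σ : Type*} [Fintype σ] (l : ℕ) (y : σ → ℝ) :
    (fun ξ => expRem (l + 1) (y ⬝ᵥ ξ)) ∈ growthSpace (σ → ℝ) l := by
  refine ⟨(continuous_expRem _).comp (by unfold dotProduct; fun_prop),
    2 * (Fintype.card σ * ‖y‖) ^ l, fun ξ => (norm_expRem_succ_le l _).trans ?_⟩
  rw [mul_assoc, ← mul_pow]
  gcongr
  exact (abs_dotProduct_le y ξ).trans (by gcongr; linarith)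

variable {α : ℝ} {d l : ℕ}

/-- The Taylor remainder of order `l` of the plane wave with frequency `y` in the spectral `L²`
space. -/
def remainderL2 (hl : (l : ℝ) < α) (y : Fin d → ℝ) : Lp ℂ 2 (maternMeasure α d) :=
  toSpectralL2 hl ⟨_, expRem_dotProduct_mem_growthSpace l y⟩

theorem waveL2_sub_sum_vVec_smul_monomialL2 (hl : (l : ℝ) < α) {kE : ℕ → Fin d → ℕ}
    (h : IsMultiIndexEnum d kE) (y : Fin d → ℝ) :
    waveL2 hl y - ∑ i, vVec kE _ y i • monomialL2 hl (kE i) (h.sum_le l i) = remainderL2 hl y := by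
  simp only [waveL2, monomialL2, remainderL2, ← map_smul, ← map_sum, ← map_sub]
  refine congrArg _ (Subtype.ext (funext fun ξ => ?_))
  simp [planeWave_eq_sum_vVec_add_expRem h l y ξ]

theorem norm_remainderL2_sq_le (hl : (l : ℝ) < α) {y : Fin d → ℝ} {τ : ℝ}
    (hy : ∀ ξ, |y ⬝ᵥ ξ| ≤ τ * ‖ξ‖) :
    ‖remainderL2 hl y‖ ^ 2 ≤ (τ ^ l) ^ 2 * (4 * truncMoment α d l τ) := by
  rw [← real_inner_self_eq_norm_sq, remainderL2, inner_toSpectralL2, truncMoment,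
    ← integral_const_mul, ← integral_const_mul]
  refine integral_mono_of_nonneg (.of_forall fun ξ => real_inner_self_nonneg)
    (((integrable_norm_pow_mul_min hl τ).const_mul _).const_mul _) (.of_forall fun ξ => ?_)
  have hτξ : 0 ≤ τ * ‖ξ‖ := (abs_nonneg _).trans (hy ξ)
  dsimp only
  rw [real_inner_self_eq_norm_sq]
  calc ‖expRem (l + 1) (y ⬝ᵥ ξ)‖ ^ 2
      ≤ 4 * |y ⬝ᵥ ξ| ^ (2 * l) * min 1 (|y ⬝ᵥ ξ| ^ 2) := norm_expRem_succ_sq_le l _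
    _ ≤ 4 * (τ * ‖ξ‖) ^ (2 * l) * min 1 ((τ * ‖ξ‖) ^ 2) := by gcongr <;> exact hy ξ
    _ = (τ ^ l) ^ 2 * (4 * (‖ξ‖ ^ (2 * l) * min 1 ((τ * ‖ξ‖) ^ 2))) := by ring

theorem abs_inner_toSpectralL2_le (hl : (l : ℝ) < α) {f g : growthSpace (Fin d → ℝ) l}
    {φ : (Fin d → ℝ) → ℝ} (hφ : Integrable φ (maternMeasure α d))
    (h : ∀ ξ, |⟪f.1 ξ, g.1 ξ⟫_ℝ| ≤ φ ξ) :
    |⟪toSpectralL2 hl f, toSpectralL2 hl g⟫_ℝ| ≤ ∫ ξ, φ ξ ∂maternMeasure α d := by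
  rw [inner_toSpectralL2, ← Real.norm_eq_abs]
  exact norm_integral_le_of_norm_le hφ (.of_forall h)

theorem abs_inner_monomialL2_remainderL2_le_of_lt (hl : (l : ℝ) < α) {k : Fin d → ℕ}
    (hk : ∑ t, k t < l) {y : Fin d → ℝ} {τ : ℝ} (hτ : 0 ≤ τ) (hy : ∀ ξ, |y ⬝ᵥ ξ| ≤ τ * ‖ξ‖) :
    |⟪monomialL2 hl k hk.le, remainderL2 hl y⟫_ℝ|
      ≤ τ ^ l * (τ * ∫ ξ, (1 + ‖ξ‖) ^ (2 * l) ∂maternMeasure α d) := by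
  rw [← integral_const_mul, ← integral_const_mul]
  refine abs_inner_toSpectralL2_le hl
    (((integrable_one_add_norm_pow (by push_cast; linarith)).const_mul _).const_mul _) fun ξ => ?_
  have hpow : ‖ξ‖ ^ ((∑ t, k t) + (l + 1)) ≤ (1 + ‖ξ‖) ^ (2 * l) :=
    (pow_le_pow_left₀ (norm_nonneg ξ) (by linarith) _).trans
      (pow_le_pow_right₀ (by linarith [norm_nonneg ξ]) (by lia))
  calc |⟪waveMonomial k ξ, expRem (l + 1) (y ⬝ᵥ ξ)⟫_ℝ|
      ≤ ‖waveMonomial k ξ‖ * ‖expRem (l + 1) (y ⬝ᵥ ξ)‖ := abs_real_inner_le_norm _ _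
    _ ≤ ‖ξ‖ ^ (∑ t, k t) * (τ * ‖ξ‖) ^ (l + 1) := by
        gcongr
        · exact norm_waveMonomial_le k ξ
        · exact (norm_expRem_le _ _).trans (pow_le_pow_left₀ (abs_nonneg _) (hy ξ) _)
    _ = τ ^ l * (τ * ‖ξ‖ ^ ((∑ t, k t) + (l + 1))) := by ring
    _ ≤ τ ^ l * (τ * (1 + ‖ξ‖) ^ (2 * l)) := by gcongr

theorem abs_inner_monomialL2_remainderL2_le_of_eq (hl : (l : ℝ) < α) {k : Fin d → ℕ}
    (hk : ∑ t, k t = l) {y : Fin d → ℝ} {τ : ℝ} (hy : ∀ ξ, |y ⬝ᵥ ξ| ≤ τ * ‖ξ‖) :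
    |⟪monomialL2 hl k hk.le, remainderL2 hl y⟫_ℝ| ≤ τ ^ l * (2 * truncMoment α d l τ) := by
  rw [truncMoment, ← integral_const_mul, ← integral_const_mul]
  refine abs_inner_toSpectralL2_le hl
    (((integrable_norm_pow_mul_min hl τ).const_mul _).const_mul _) fun ξ => ?_
  have hτξ : 0 ≤ τ * ‖ξ‖ := (abs_nonneg _).trans (hy ξ)
  have hmon := norm_waveMonomial_le k ξ
  dsimp only
  rw [waveMonomial_eq_I_pow_mul, norm_mul, norm_pow, Complex.norm_I, one_pow, mul_one,
    Complex.norm_real, Real.norm_eq_abs, hk] at hmon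
  rw [waveMonomial_eq_I_pow_mul, hk, ← Complex.real_smul, real_inner_smul_left, abs_mul]
  calc _ ≤ ‖ξ‖ ^ l * (2 * |y ⬝ᵥ ξ| ^ l * min 1 (|y ⬝ᵥ ξ| ^ 2)) :=
        mul_le_mul hmon (abs_inner_I_pow_expRem_succ_le l _) (abs_nonneg _) (by positivity)
    _ ≤ ‖ξ‖ ^ l * (2 * (τ * ‖ξ‖) ^ l * min 1 ((τ * ‖ξ‖) ^ 2)) := by gcongr <;> exact hy ξ
    _ = τ ^ l * (2 * (‖ξ‖ ^ (2 * l) * min 1 ((τ * ‖ξ‖) ^ 2))) := by ring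

theorem exists_nearlyOrthogonal_remainderL2 (hl : (l : ℝ) < α) {ι : Type*} {k : ι → Fin d → ℕ}
    (hk : ∀ i, ∑ t, k i t ≤ l) :
    ∃ C, 0 ≤ C ∧ ∀ τ, 0 < τ → ∀ y : Fin d → ℝ, (∀ ξ, |y ⬝ᵥ ξ| ≤ τ * ‖ξ‖) →
      NearlyOrthogonal (fun i => monomialL2 hl (k i) (hk i)) (τ ^ l)
        (√(C * (τ ^ (2 * (α - l)) + τ))) (remainderL2 hl y) := by
  obtain ⟨C, hC, hmom⟩ := exists_truncMoment_le (d := d) hl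
  have hM : 0 ≤ ∫ ξ, (1 + ‖ξ‖) ^ (2 * l) ∂maternMeasure α d :=
    integral_nonneg fun ξ => by positivity
  refine ⟨4 * C + ∫ ξ, (1 + ‖ξ‖) ^ (2 * l) ∂maternMeasure α d, by positivity, fun τ hτ y hy => ?_⟩
  have hJ := hmom τ hτ
  have hJ0 := truncMoment_nonneg (α := α) (d := d) (l := l) τ
  have hrate : 0 ≤ τ ^ (2 * (α - l)) := Real.rpow_nonneg hτ.le _
  have hMrate := mul_nonneg hM hrate
  have hMτ := mul_nonneg hM hτ.le
  refine ⟨(sq_le_sq₀ (norm_nonneg _) (by positivity)).mp ?_, fun i => ?_⟩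
  · rw [mul_pow, Real.sq_sqrt (by positivity)]
    refine (norm_remainderL2_sq_le hl hy).trans ?_
    exact mul_le_mul_of_nonneg_left (by linarith) (by positivity)
  · rw [Real.sq_sqrt (by positivity)]
    rcases (hk i).lt_or_eq with hlt | heq
    · refine (abs_inner_monomialL2_remainderL2_le_of_lt hl hlt hτ.le hy).trans ?_
      exact mul_le_mul_of_nonneg_left (by linarith) (by positivity)
    · refine (abs_inner_monomialL2_remainderL2_le_of_eq hl heq hy).trans ?_
      exact mul_le_mul_of_nonneg_left (by linarith) (by positivity)

end WaveRemainder

section Vandermonde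

open MvPolynomial

variable {d l m : ℕ} {Ω : Set (Fin d → ℝ)} {kE : ℕ → Fin d → ℕ} {c : ℝ}

/-- `Ω` determines the polynomials of total degree at most `l`: only the zero polynomial vanishes
on it. -/
def IsUnisolvent (l : ℕ) (Ω : Set (Fin d → ℝ)) : Prop :=
  ∀ P : MvPolynomial (Fin d) ℝ, P.totalDegree ≤ l → (∀ x ∈ Ω, eval x P = 0) → P = 0

/-- The `m`-tuples in `Ω` that are norming for polynomials of degree at most `l` with constant
`c`. -/
def normingSet (l : ℕ) (Ω : Set (Fin d → ℝ)) (m : ℕ) (c : ℝ) : Set (Fin m → Fin d → ℝ) :=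
  {w | (∀ i, w i ∈ Ω) ∧ IsNorming l Ω w c}

theorem isCompact_normingSet (hΩ : IsCompact Ω) : IsCompact (normingSet l Ω m c) := by
  have hpi : IsCompact (Set.pi Set.univ fun _ : Fin m => Ω) := isCompact_univ_pi fun _ => hΩ
  have hinter : normingSet l Ω m c = (Set.pi Set.univ fun _ : Fin m => Ω) ∩
      ⋂ P : MvPolynomial (Fin d) ℝ, ⋂ _ : P.totalDegree ≤ l, ⋂ x ∈ Ω,
        {w | |eval x P| ≤ c * ‖fun i => eval (w i) P‖} := by
    have hnorm : ∀ f : Fin m → ℝ, ‖f‖ = ⨆ i, |f i| := fun f => by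
      simpa using PiLp.norm_eq_ciSup (WithLp.toLp ⊤ f)
    ext w
    simp [normingSet, IsNorming, hnorm]
  rw [hinter]
  refine hpi.inter_right (isClosed_iInter fun P => isClosed_iInter fun _ =>
    isClosed_biInter fun x _ => isClosed_le continuous_const (continuous_const.mul ?_))
  exact (continuous_pi fun i => (continuous_eval P).comp (continuous_apply i)).norm

theorem isUnit_det_vand (h : IsMultiIndexEnum d kE) (hΩ : IsUnisolvent l Ω)
    {w : Fin ((l + d).choose l) → Fin d → ℝ} (hw : IsNorming l Ω w c) :
    IsUnit (vand kE _ w).det := by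
  rw [isUnit_iff_ne_zero]
  intro hdet
  obtain ⟨a, ha, ha_vecMul⟩ := Matrix.exists_vecMul_eq_zero_iff.mpr hdet
  refine ha (eq_zero_of_monomialSum_eq_zero (h.injective_fin l) <|
    hΩ _ (totalDegree_monomialSum_le (h.sum_le l) a) fun x hx => ?_)
  have hzero : ∀ j, eval (w j) (monomialSum (fun i : Fin _ => kE i) a) = 0 := fun j => by
    rw [eval_monomialSum]
    exact congrFun ha_vecMul j
  simpa [hzero] using hw _ (totalDegree_monomialSum_le (h.sum_le l) a) x hx

theorem injective_of_isUnit_det_vand {w : Fin m → Fin d → ℝ} (hw : IsUnit (vand kE m w).det) :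
    Function.Injective w := by
  intro i j hij
  by_contra hne
  exact hw.ne_zero (Matrix.det_zero_of_column_eq hne fun k => by simp [vand, hij])

theorem injective_smul_of_isUnit_det_vand {w : Fin m → Fin d → ℝ}
    (hw : IsUnit (vand kE m w).det) {ν : ℝ} (hν : ν ≠ 0) : Function.Injective (ν • w) :=
  (smul_right_injective (Fin d → ℝ) hν).comp (injective_of_isUnit_det_vand hw)

theorem continuous_vand (kE : ℕ → Fin d → ℕ) (m : ℕ) : Continuous (vand kE m) := by
  refine continuous_matrix fun i j => ?_
  simp only [vand, Matrix.of_apply]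
  fun_prop

theorem continuous_vVec (kE : ℕ → Fin d → ℕ) (m : ℕ) : Continuous (vVec kE m) := by
  unfold vVec
  fun_prop

theorem vand_smul_mulVec (w : Fin m → Fin d → ℝ) (ν : ℝ) (δ : Fin m → ℝ) (k : Fin m) :
    (vand kE m (ν • w) *ᵥ δ) k = ν ^ (∑ t, kE k t) * (vand kE m w *ᵥ δ) k := by
  simp [vand, mulVec, dotProduct, mul_pow, Finset.prod_mul_distrib, Finset.prod_pow_eq_pow_sum,
    Finset.mul_sum, mul_assoc]

theorem vVec_smul (x : Fin d → ℝ) (ν : ℝ) (k : Fin m) :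
    vVec kE m (ν • x) k = ν ^ (∑ t, kE k t) * vVec kE m x k := by
  simp [vVec, mul_pow, Finset.prod_mul_distrib, Finset.prod_pow_eq_pow_sum]

theorem sum_abs_mulVec_le {ι κ : Type*} [Fintype ι] [Fintype κ] (A : Matrix ι κ ℝ) (x : κ → ℝ) :
    ∑ i, |(A *ᵥ x) i| ≤ (∑ i, ∑ j, |A i j|) * ∑ j, |x j| := by
  rw [Finset.sum_mul]
  refine Finset.sum_le_sum fun i _ => (Finset.abs_sum_le_sum_abs _ _).trans ?_
  rw [Finset.sum_mul]
  refine Finset.sum_le_sum fun j _ => ?_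
  rw [abs_mul]
  exact mul_le_mul_of_nonneg_left
    (Finset.single_le_sum (f := fun j => |x j|) (fun j _ => abs_nonneg _) (Finset.mem_univ j))
    (abs_nonneg _)

theorem pow_mul_sum_abs_le_vand_smul {w : Fin m → Fin d → ℝ} (hw : IsUnit (vand kE m w).det)
    (hk : ∀ k : Fin m, ∑ t, kE k t ≤ l) {ν : ℝ} (hν0 : 0 ≤ ν) (hν1 : ν ≤ 1) (δ : Fin m → ℝ) :
    ν ^ l * ∑ i, |δ i|
      ≤ (∑ i, ∑ j, |(vand kE m w)⁻¹ i j|) * ∑ k, |(vand kE m (ν • w) *ᵥ δ) k| := by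
  have hδ : (vand kE m w)⁻¹ *ᵥ (vand kE m w *ᵥ δ) = δ := by
    rw [mulVec_mulVec, nonsing_inv_mul _ hw, one_mulVec]
  calc ν ^ l * ∑ i, |δ i|
      ≤ ν ^ l * ((∑ i, ∑ j, |(vand kE m w)⁻¹ i j|) * ∑ k, |(vand kE m w *ᵥ δ) k|) := by
        gcongr
        simpa only [hδ] using sum_abs_mulVec_le (vand kE m w)⁻¹ (vand kE m w *ᵥ δ)
    _ = (∑ i, ∑ j, |(vand kE m w)⁻¹ i j|) * ∑ k, ν ^ l * |(vand kE m w *ᵥ δ) k| := by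
        rw [← Finset.mul_sum, mul_left_comm]
    _ ≤ _ := by
        refine mul_le_mul_of_nonneg_left (Finset.sum_le_sum fun k _ => ?_) (by positivity)
        rw [vand_smul_mulVec, abs_mul, abs_of_nonneg (pow_nonneg hν0 _)]
        exact mul_le_mul_of_nonneg_right (pow_le_pow_of_le_one hν0 hν1 (hk k)) (abs_nonneg _)

/-- The weights `V_A⁻¹ v_x` of polynomial interpolation. -/
def polynomialWeights (kE : ℕ → Fin d → ℕ) (w : Fin m → Fin d → ℝ) (x : Fin d → ℝ) :
    Fin m → ℝ :=
  (vand kE m w)⁻¹ *ᵥ vVec kE m x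

theorem vand_smul_mulVec_polynomialWeights {w : Fin m → Fin d → ℝ}
    (hw : IsUnit (vand kE m w).det) (x : Fin d → ℝ) (ν : ℝ) :
    vand kE m (ν • w) *ᵥ polynomialWeights kE w x = vVec kE m (ν • x) := by
  funext k
  rw [vand_smul_mulVec, vVec_smul, polynomialWeights, mulVec_mulVec, mul_nonsing_inv _ hw,
    one_mulVec]

theorem continuousOn_matrix_inv {ι 𝕜 X : Type*} [Fintype ι] [DecidableEq ι]
    [NormedField 𝕜] [TopologicalSpace X] {A : X → Matrix ι ι 𝕜} {s : Set X}
    (hA : ContinuousOn A s) (hdet : ∀ x ∈ s, IsUnit (A x).det) :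
    ContinuousOn (fun x => (A x)⁻¹) s := fun x hx =>
  (continuousAt_matrix_inv (A x) (by
    rw [Ring.inverse_eq_inv']
    exact continuousAt_inv₀ (hdet x hx).ne_zero)).comp_continuousWithinAt (hA x hx)

theorem continuousOn_inv_vand (h : IsMultiIndexEnum d kE) (hΩ : IsUnisolvent l Ω) (c : ℝ) :
    ContinuousOn (fun w => (vand kE _ w)⁻¹) (normingSet l Ω ((l + d).choose l) c) :=
  continuousOn_matrix_inv (continuous_vand kE _).continuousOn
    fun _ hw => isUnit_det_vand h hΩ hw.2

theorem exists_sum_abs_inv_vand_le (h : IsMultiIndexEnum d kE) (hΩc : IsCompact Ω)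
    (hΩ : IsUnisolvent l Ω) (c : ℝ) :
    ∃ C, 0 ≤ C ∧ ∀ w ∈ normingSet l Ω ((l + d).choose l) c,
      ∑ i, ∑ j, |(vand kE _ w)⁻¹ i j| ≤ C := by
  have hsum : Continuous fun A : Matrix (Fin ((l + d).choose l)) (Fin ((l + d).choose l)) ℝ =>
      ∑ i, ∑ j, |A i j| := by fun_prop
  obtain ⟨C, hC⟩ := (isCompact_normingSet hΩc).exists_bound_of_continuousOn
    (hsum.comp_continuousOn (continuousOn_inv_vand h hΩ c))
  exact ⟨|C|, abs_nonneg C, fun w hw => (le_abs_self _).trans ((hC w hw).trans (le_abs_self C))⟩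

end Vandermonde

section FlatLimit

open scoped InnerProductSpace Topology

variable {α c : ℝ} {d l m : ℕ} {Ω : Set (Fin d → ℝ)} {kE : ℕ → Fin d → ℕ}

/-- The weights `K_{A,A}⁻¹ K_{A,x}` of Matérn interpolation. -/
def kernelWeights (α : ℝ) (w : Fin m → Fin d → ℝ) (x : Fin d → ℝ) : Fin m → ℝ :=
  (maternMat α d w)⁻¹ *ᵥ maternVec α d w x

/-- The `ℓ¹` distance between the Matérn weights at scale `ν` and the polynomial weights. -/
def weightGap (α : ℝ) (kE : ℕ → Fin d → ℕ) (w : Fin m → Fin d → ℝ) (x : Fin d → ℝ) (ν : ℝ) : ℝ :=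
  ∑ i, |kernelWeights α (ν • w) (ν • x) i - polynomialWeights kE w x i|

theorem inner_waveL2_sub_sum_kernelWeights (hl : (l : ℝ) < α) {w : Fin m → Fin d → ℝ}
    (hw : Function.Injective w) (x : Fin d → ℝ) (i : Fin m) :
    ⟪waveL2 hl (w i), waveL2 hl x - ∑ j, kernelWeights α w x j • waveL2 hl (w j)⟫_ℝ = 0 := by
  have hα : 0 < α := l.cast_nonneg.trans_lt hl
  have hsolve : maternMat α d w *ᵥ kernelWeights α w x = maternVec α d w x := by
    rw [kernelWeights, mulVec_mulVec, mul_nonsing_inv _ (isUnit_det_maternMat hα hw), one_mulVec]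
  simp only [inner_sub_right, inner_sum, real_inner_smul_right, inner_waveL2]
  refine sub_eq_zero.mpr ((congrFun hsolve i).symm.trans ?_)
  simp only [mulVec, dotProduct, maternMat, of_apply, mul_comm]

theorem weightGap_le_of_nearlyOrthogonal (hl : (l : ℝ) < α) (h : IsMultiIndexEnum d kE)
    {w : Fin ((l + d).choose l) → Fin d → ℝ} (hw : IsUnit (vand kE _ w).det) {x : Fin d → ℝ}
    {ν s p η : ℝ} (hν : 0 < ν) (hs : 0 < s) (hp : 0 < p) (hcη : c * η ≤ s / 2)
    (hq : ∀ y : Fin ((l + d).choose l) → ℝ, s * ∑ k, |y k| ≤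
      ‖∑ k, y k • monomialL2 hl (kE k) (h.sum_le l k)‖)
    (hW : ∀ δ, p * ∑ i, |δ i| ≤ c * ∑ k, |(vand kE _ (ν • w) *ᵥ δ) k|)
    (hrw : ∀ i, NearlyOrthogonal
      (fun k : Fin ((l + d).choose l) => monomialL2 hl (kE k) (h.sum_le l k)) p η
      (remainderL2 hl (ν • w i)))
    (hrx : NearlyOrthogonal
      (fun k : Fin ((l + d).choose l) => monomialL2 hl (kE k) (h.sum_le l k)) p η
      (remainderL2 hl (ν • x)))
    (hb : ∑ i, |polynomialWeights kE w x i| ≤ c) :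
    weightGap α kE w x ν ≤ 4 * c * (1 + c) ^ 2 / s ^ 2 * η ^ 2 := by
  refine sum_abs_sub_le_of_nearlyOrthogonal hs hp hcη hq hW (fun i => ?_) ?_ hb
    (inner_waveL2_sub_sum_kernelWeights hl (injective_smul_of_isUnit_det_vand hw hν.ne') _)
  · exact (waveL2_sub_sum_vVec_smul_monomialL2 hl h (ν • w i)).symm ▸ hrw i
  · rw [vand_smul_mulVec_polynomialWeights hw]
    exact (waveL2_sub_sum_vVec_smul_monomialL2 hl h (ν • x)).symm ▸ hrx

theorem tendsto_rpow_add_id {s : ℝ} (hs : 0 < s) :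
    Filter.Tendsto (fun τ : ℝ => τ ^ s + τ) (𝓝 0) (𝓝 0) := by
  have hcont : Continuous fun τ : ℝ => τ ^ s + τ := by fun_prop (disch := exact hs.le)
  simpa [Real.zero_rpow hs.ne'] using hcont.tendsto 0

theorem exists_one_le_abs_smul_dotProduct_le (hΩ : Bornology.IsBounded Ω) :
    ∃ D, 1 ≤ D ∧ ∀ y ∈ Ω, ∀ ν, 0 ≤ ν → ∀ ξ, |(ν • y) ⬝ᵥ ξ| ≤ D * ν * ‖ξ‖ := by
  obtain ⟨R, hR, hΩR⟩ := hΩ.exists_pos_norm_le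
  refine ⟨d * R + 1, le_add_of_nonneg_left (by positivity), fun y hy ν hν ξ => ?_⟩
  calc |(ν • y) ⬝ᵥ ξ| ≤ d * (ν * ‖y‖) * ‖ξ‖ := by
        simpa [norm_smul, abs_of_nonneg hν] using abs_dotProduct_le (ν • y) ξ
    _ ≤ d * (ν * R) * ‖ξ‖ := by gcongr; exact hΩR y hy
    _ ≤ (d * R + 1) * ν * ‖ξ‖ := by linarith [mul_nonneg hν (norm_nonneg ξ)]

theorem rpow_mul_add_mul_le {D ν : ℝ} (hD : 0 ≤ D) (hν : 0 ≤ ν) (s : ℝ) :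
    (D * ν) ^ s + D * ν ≤ (D ^ s + D) * (ν ^ s + ν) := by
  rw [Real.mul_rpow hD hν]
  linarith [mul_nonneg (Real.rpow_nonneg hD s) hν, mul_nonneg hD (Real.rpow_nonneg hν s)]

theorem exists_nearlyOrthogonal_remainderL2_smul (hl : (l : ℝ) < α)
    (hΩ : Bornology.IsBounded Ω) {ι : Type*} {k : ι → Fin d → ℕ} (hk : ∀ i, ∑ t, k i t ≤ l) :
    ∃ C, 0 ≤ C ∧ ∀ ν, 0 < ν → ∀ y ∈ Ω, NearlyOrthogonal (fun i => monomialL2 hl (k i) (hk i))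
      (ν ^ l) (√(C * (ν ^ (2 * (α - l)) + ν))) (remainderL2 hl (ν • y)) := by
  obtain ⟨D, hD, hdot⟩ := exists_one_le_abs_smul_dotProduct_le hΩ
  obtain ⟨C, hC, hrem⟩ := exists_nearlyOrthogonal_remainderL2 hl hk
  have hD0 : 0 < D := zero_lt_one.trans_le hD
  refine ⟨(D ^ l) ^ 2 * (C * (D ^ (2 * (α - l)) + D)), by positivity, fun ν hν y hy => ?_⟩
  have hrem := hrem (D * ν) (by positivity) _ (hdot y hy ν hν.le)
  rw [mul_pow] at hrem
  refine hrem.of_mul (by positivity) (Real.sqrt_nonneg _) (one_le_pow₀ hD) ?_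
  refine Real.le_sqrt_of_sq_le ?_
  rw [mul_pow, Real.sq_sqrt (by positivity), mul_assoc, mul_assoc]
  gcongr
  exact rpow_mul_add_mul_le hD0.le hν.le _

theorem exists_sum_abs_polynomialWeights_le (h : IsMultiIndexEnum d kE) (hΩc : IsCompact Ω)
    (hΩ : IsUnisolvent l Ω) (c : ℝ) :
    ∃ C, ∀ w ∈ normingSet l Ω ((l + d).choose l) c, ∀ x ∈ Ω,
      ∑ i, |polynomialWeights kE w x i| ≤ C := by
  obtain ⟨C, hC0, hC⟩ := exists_sum_abs_inv_vand_le h hΩc hΩ c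
  have hcont : Continuous fun x : Fin d → ℝ => ∑ i, |vVec kE ((l + d).choose l) x i| := by
    have := continuous_vVec kE ((l + d).choose l)
    fun_prop
  obtain ⟨B, hB⟩ := hΩc.exists_bound_of_continuousOn hcont.continuousOn
  refine ⟨C * B, fun w hw x hx => (sum_abs_mulVec_le _ _).trans ?_⟩
  exact mul_le_mul (hC w hw) ((le_abs_self _).trans (hB x hx)) (by positivity) hC0

theorem exists_weightGap_le_of_lt (hl : (l : ℝ) < α) (h : IsMultiIndexEnum d kE)
    (hΩc : IsCompact Ω) (hΩ : IsUnisolvent l Ω) (c : ℝ) :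
    ∃ C ν₀, 0 ≤ C ∧ 0 < ν₀ ∧ ∀ w ∈ normingSet l Ω ((l + d).choose l) c, ∀ x ∈ Ω, ∀ ν, 0 < ν →
      ν < ν₀ → ν ≤ 1 → weightGap α kE w x ν ≤ C * (ν ^ (2 * (α - l)) + ν) := by
  obtain ⟨s, hs, hq⟩ := exists_mul_sum_abs_le_norm_sum_smul
    (linearIndependent_monomialL2 hl (h.injective_fin l) (h.sum_le l))
  obtain ⟨C, hC, hrem⟩ :=
    exists_nearlyOrthogonal_remainderL2_smul hl hΩc.isBounded (h.sum_le l)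
  obtain ⟨A, hA0, hA⟩ := exists_sum_abs_inv_vand_le h hΩc hΩ c
  obtain ⟨B, hB⟩ := exists_sum_abs_polynomialWeights_le h hΩc hΩ c
  have hsmall : ∀ᶠ ν in 𝓝 0, max A B * √(C * (ν ^ (2 * (α - l)) + ν)) < s / 2 := by
    have hη := ((tendsto_rpow_add_id (s := 2 * (α - l)) (by linarith)).const_mul C).sqrt.const_mul
      (max A B)
    rw [mul_zero, Real.sqrt_zero, mul_zero] at hη
    exact hη.eventually_lt_const (by positivity)
  obtain ⟨ν₀, hν₀, hsmall⟩ := Metric.eventually_nhds_iff.mp hsmall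
  have : 0 ≤ max A B := hA0.trans (le_max_left A B)
  refine ⟨4 * max A B * (1 + max A B) ^ 2 / s ^ 2 * C, ν₀, by positivity, hν₀,
    fun w hw x hx ν hν hνν₀ hν1 => ?_⟩
  have hdet := isUnit_det_vand h hΩ hw.2
  have hW : ∀ δ, ν ^ l * ∑ i, |δ i| ≤ max A B * ∑ k, |(vand kE _ (ν • w) *ᵥ δ) k| := fun δ =>
    (pow_mul_sum_abs_le_vand_smul hdet (h.sum_le l) hν.le hν1 δ).trans <| by
      gcongr
      exact (hA w hw).trans (le_max_left A B)
  have hgap := weightGap_le_of_nearlyOrthogonal hl h hdet hν hs (pow_pos hν l)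
    (hsmall (y := ν) (by simpa [abs_of_pos hν] using hνν₀)).le hq hW (fun i => hrem ν hν _ (hw.1 i))
    (hrem ν hν x hx) ((hB w hw x hx).trans (le_max_right A B))
  rwa [Real.sq_sqrt (by positivity), ← mul_assoc] at hgap

theorem continuous_matern (hα : 0 < α) (d : ℕ) : Continuous (matern α d) := by
  have hcont : Continuous fun y : Fin d → ℝ =>
      ∫ ξ : Fin d → ℝ, Real.cos (∑ j, y j * ξ j) ∂maternMeasure α d := by
    refine continuous_of_dominated (bound := fun _ => 1) (fun y => ?_) (fun y => ?_) ?_ ?_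
    · exact Continuous.aestronglyMeasurable (by fun_prop)
    · exact .of_forall fun ξ => Real.abs_cos_le_one _
    · simpa using integrable_one_add_norm_pow (α := α) (d := d) (n := 0) (by simpa using hα)
    · exact .of_forall fun ξ => by fun_prop
  convert hcont using 2 with y
  exact (integral_maternMeasure _).symm

theorem continuousOn_weightGap (hα : 0 < α) (h : IsMultiIndexEnum d kE)
    (hΩ : IsUnisolvent l Ω) (c : ℝ) :
    ContinuousOn (fun z : (Fin ((l + d).choose l) → Fin d → ℝ) × (Fin d → ℝ) × ℝ =>
      weightGap α kE z.1 z.2.1 z.2.2) (normingSet l Ω _ c ×ˢ Ω ×ˢ Set.Ioi 0) := by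
  have hmat := continuous_matern hα d
  have hkernel : ContinuousOn (fun z : (Fin ((l + d).choose l) → Fin d → ℝ) × (Fin d → ℝ) × ℝ =>
      (maternMat α d (z.2.2 • z.1))⁻¹) (normingSet l Ω _ c ×ˢ Ω ×ˢ Set.Ioi 0) := by
    refine continuousOn_matrix_inv (Continuous.continuousOn ?_) fun z hz => ?_
    · exact continuous_matrix fun i j => hmat.comp (by fun_prop)
    · exact isUnit_det_maternMat hα <| injective_smul_of_isUnit_det_vand
        (isUnit_det_vand h hΩ hz.1.2) (ne_of_gt hz.2.2)
  have hkernelVec : Continuous fun z : (Fin ((l + d).choose l) → Fin d → ℝ) × (Fin d → ℝ) × ℝ =>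
      maternVec α d (z.2.2 • z.1) (z.2.2 • z.2.1) :=
    continuous_pi fun i => hmat.comp (by fun_prop)
  have hvand := (continuousOn_inv_vand h hΩ c).comp continuousOn_fst
    (fun z (hz : z ∈ normingSet l Ω _ c ×ˢ Ω ×ˢ Set.Ioi (0 : ℝ)) => hz.1)
  have hvVec := (continuous_vVec kE ((l + d).choose l)).comp
    (continuous_fst.comp continuous_snd : Continuous
      fun z : (Fin ((l + d).choose l) → Fin d → ℝ) × (Fin d → ℝ) × ℝ => z.2.1)
  have hmul : Continuous fun p : Matrix (Fin ((l + d).choose l)) (Fin ((l + d).choose l)) ℝ ×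
      (Fin ((l + d).choose l) → ℝ) => p.1 *ᵥ p.2 := continuous_fst.matrix_mulVec continuous_snd
  refine continuousOn_finsetSum _ fun i _ => (ContinuousOn.sub ?_ ?_).abs
  · exact ((continuous_apply i).comp hmul).comp_continuousOn
      (hkernel.prodMk hkernelVec.continuousOn)
  · exact ((continuous_apply i).comp hmul).comp_continuousOn (hvand.prodMk hvVec.continuousOn)

theorem exists_weightGap_le_of_le (hα : 0 < α) (h : IsMultiIndexEnum d kE) (hΩc : IsCompact Ω)
    (hΩ : IsUnisolvent l Ω) (c : ℝ) {ν₀ : ℝ} (hν₀ : 0 < ν₀) :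
    ∃ C, 0 ≤ C ∧ ∀ w ∈ normingSet l Ω ((l + d).choose l) c, ∀ x ∈ Ω, ∀ ν, ν₀ ≤ ν → ν ≤ 1 →
      weightGap α kE w x ν ≤ C := by
  obtain ⟨C, hC⟩ := ((isCompact_normingSet hΩc).prod
    (hΩc.prod (isCompact_Icc (a := ν₀) (b := 1)))).exists_bound_of_continuousOn <|
      (continuousOn_weightGap hα h hΩ c).mono <| Set.prod_mono_right <| Set.prod_mono_right
        fun ν hν => hν₀.trans_le hν.1
  exact ⟨|C|, abs_nonneg C, fun w hw x hx ν hνν₀ hν1 => (le_abs_self _).trans <|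
    (hC (w, x, ν) ⟨hw, hx, hνν₀, hν1⟩).trans (le_abs_self C)⟩

theorem exists_weightGap_le (hl : (l : ℝ) < α) (h : IsMultiIndexEnum d kE)
    (hΩc : IsCompact Ω) (hΩ : IsUnisolvent l Ω) (c : ℝ) :
    ∃ C, 0 < C ∧ ∀ w ∈ normingSet l Ω ((l + d).choose l) c, ∀ x ∈ Ω, ∀ ν, 0 < ν → ν ≤ 1 →
      weightGap α kE w x ν ≤ C * (ν ^ (2 * (α - l)) + ν) := by
  obtain ⟨C, ν₀, hC, hν₀, hsmall⟩ := exists_weightGap_le_of_lt hl h hΩc hΩ c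
  obtain ⟨B, hB, hlarge⟩ :=
    exists_weightGap_le_of_le (l.cast_nonneg.trans_lt hl) h hΩc hΩ c hν₀
  refine ⟨C + B / ν₀ + 1, by positivity, fun w hw x hx ν hν hν1 => ?_⟩
  have hrate : ν ≤ ν ^ (2 * (α - l)) + ν := le_add_of_nonneg_left (by positivity)
  rcases lt_or_ge ν ν₀ with hlt | hge
  · refine (hsmall w hw x hx ν hν hlt hν1).trans ?_
    gcongr
    linarith [div_nonneg hB hν₀.le]
  · calc weightGap α kE w x ν ≤ B := hlarge w hw x hx ν hge hν1
      _ = B / ν₀ * ν₀ := (div_mul_cancel₀ B hν₀.ne').symm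
      _ ≤ (C + B / ν₀ + 1) * (ν ^ (2 * (α - l)) + ν) := by
        gcongr
        · linarith
        · exact hge.trans hrate

end FlatLimit

section UnitCube

theorem lbelow_add_one {α : ℝ} (hα : 0 < α) : lbelow α + 1 = ⌈α⌉₊ :=
  Nat.sub_add_cancel (Nat.ceil_pos.mpr hα)

theorem lbelow_lt {α : ℝ} (hα : 0 < α) : (lbelow α : ℝ) < α :=
  Nat.lt_ceil.mp (Nat.lt_of_succ_le (lbelow_add_one hα).le)

theorem eq_lbelow_add_one {α : ℝ} (hα : 0 < α) (h : IsNatVal α) : α = lbelow α + 1 := by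
  obtain ⟨n, rfl⟩ := h
  exact_mod_cast ((lbelow_add_one hα).trans (Nat.ceil_natCast n)).symm

theorem unitCube_eq_pi (d : ℕ) : unitCube d = Set.univ.pi fun _ => Set.Icc 0 1 := by
  ext x
  simp [unitCube, Pi.le_def, forall_and]

theorem isCompact_unitCube (d : ℕ) : IsCompact (unitCube d) :=
  unitCube_eq_pi d ▸ isCompact_univ_pi fun _ => isCompact_Icc

theorem isUnisolvent_unitCube (l d : ℕ) : IsUnisolvent l (unitCube d) := fun P _ hP =>
  MvPolynomial.funext_set (fun _ => Set.Icc (0 : ℝ) 1) (fun _ => Set.Icc_infinite zero_lt_one)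
    fun x hx => by simpa using hP x (unitCube_eq_pi d ▸ hx)

theorem rpow_add_self_le_two_mul_rpow_mul_log {s ν : ℝ} (hs : 1 ≤ s) (hν0 : 0 < ν) (hν1 : ν ≤ 1) :
    ν ^ s + ν ≤ 2 * (ν ^ s * Real.log (1 / ν) + ν) := by
  have hle : ν ^ s ≤ ν := Real.rpow_le_self_of_le_one hν0.le hν1 hs
  have hlog : 0 ≤ Real.log (1 / ν) := Real.log_nonneg ((one_le_div hν0).mpr hν1)
  linarith [mul_nonneg (Real.rpow_nonneg hν0.le s) hlog]

end UnitCube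

theorem stmt13_general {α : ℝ} {d l : ℕ} (hl : (l : ℝ) < α) {kE : ℕ → Fin d → ℕ}
    (hkE : IsMultiIndexEnum d kE) {Ω : Set (Fin d → ℝ)} (hΩc : IsCompact Ω)
    (hΩ : IsUnisolvent l Ω) (c : ℝ) :
    ∃ C : ℝ, 0 < C ∧ ∀ w : Fin ((l + d).choose l) → Fin d → ℝ,
      (∀ i, w i ∈ Ω) → IsNorming l Ω w c → ∀ x ∈ Ω, ∀ ν : ℝ, 0 < ν → ν ≤ 1 →
        IsUnit (maternMat α d (ν • w)).det ∧
          weightGap α kE w x ν ≤ C * (ν ^ (2 * (α - l)) + ν) := by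
  obtain ⟨C, hC, hgap⟩ := exists_weightGap_le hl hkE hΩc hΩ c
  exact ⟨C, hC, fun w hw hN x hx ν hν hν1 =>
    ⟨isUnit_det_maternMat (l.cast_nonneg.trans_lt hl)
      (injective_smul_of_isUnit_det_vand (isUnit_det_vand hkE hΩ hN) hν.ne'),
      hgap w ⟨hw, hN⟩ x hx ν hν hν1⟩⟩

/-- Lemma `GP flat`, first part: for a norming set `A ⊂ [0,1]^d` for
`𝒫_{⌊α⌋⁻}([0,1]^d)` with norming constant `c_N`, the Gaussian interpolation weights at scale
`ν ∈ (0,1)` converge to the polynomial interpolation weights: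
`‖K_{νA,νA}⁻¹ K_{νA,νx} − V_A⁻¹ v_x‖₁ ≤ C (ν^{2(α−⌊α⌋⁻)} Λ + ν)`. -/
theorem stmt13 (α : ℝ) (hα : 0 < α) (d : ℕ) (hd : 1 ≤ d) (cN : ℝ) (hcN : 0 < cN)
    (kE : ℕ → Fin d → ℕ) (hkE : IsMultiIndexEnum d kE) :
    ∃ C : ℝ, 0 < C ∧
      ∀ w : Fin ((lbelow α + d).choose (lbelow α)) → Fin d → ℝ,
        (∀ i, w i ∈ unitCube d) →
        IsNorming (lbelow α) (unitCube d) w cN →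
        ∀ x ∈ unitCube d, ∀ ν : ℝ, 0 < ν → ν < 1 →
          IsUnit (maternMat α d (fun i t => ν * w i t)).det ∧
          (¬ IsNatVal α →
            (∑ i, |((maternMat α d (fun i t => ν * w i t))⁻¹ *ᵥ
                  maternVec α d (fun i t => ν * w i t) (fun t => ν * x t)) i -
                ((vand kE ((lbelow α + d).choose (lbelow α)) w)⁻¹ *ᵥ
                  vVec kE ((lbelow α + d).choose (lbelow α)) x) i|) ≤
              C * (ν ^ (2 * (α - (lbelow α : ℝ))) + ν)) ∧
          (IsNatVal α →
            (∑ i, |((maternMat α d (fun i t => ν * w i t))⁻¹ *ᵥ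
                  maternVec α d (fun i t => ν * w i t) (fun t => ν * x t)) i -
                ((vand kE ((lbelow α + d).choose (lbelow α)) w)⁻¹ *ᵥ
                  vVec kE ((lbelow α + d).choose (lbelow α)) x) i|) ≤
              C * (ν ^ (2 * (α - (lbelow α : ℝ))) * Real.log (1 / ν) + ν)) := by
  obtain ⟨C, hC, hgen⟩ := stmt13_general (lbelow_lt hα) hkE (isCompact_unitCube d)
    (isUnisolvent_unitCube (lbelow α) d) cN
  refine ⟨2 * C, by positivity, fun w hw hN x hx ν hν hν1 => ?_⟩
  obtain ⟨hunit, hgap⟩ := hgen w hw hN x hx ν hν hν1.le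
  refine ⟨hunit, fun _ => hgap.trans ?_, fun hnat => hgap.trans ?_⟩
  · gcongr
    linarith
  · have hs : 1 ≤ 2 * (α - lbelow α) := by linarith [eq_lbelow_add_one hα hnat]
    linarith [mul_le_mul_of_nonneg_left
      (rpow_add_self_le_two_mul_rpow_mul_log hs hν hν1.le) hC.le]
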